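/- Let T be a computable real number with 0 < T < 1. Then the series Z(T) = ∑_{p ∈ dom U} 2^{−|p|/T}, W(1,T) = ∑_{p ∈ dom U} |p|·2^{−|p|/T}, and W(2,T) = ∑_{p ∈ dom U} |p|²·2^{−|p|/T} converge with Z(T) > 0; the specific heat C(T) = (ln 2 / T²)·( W(2,T)/Z(T) − (W(1,T)/Z(T))² ) is a left-computable real number which is Chaitin T-random and T-compressible; and the energy function x ↦ E(x) = W(1,x)/Z(x) on (0,1) is differentiable at T with derivative E'(T) = C(T). -/

import Mathlib

open Filter

/-- A set of finite binary strings is prefix-free if no element of it is a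
prefix of another (distinct) element of it. -/
def PrefixFree (S : Set (List Bool)) : Prop :=
  ∀ p ∈ S, ∀ q ∈ S, p <+: q → p = q

/-- A computer: a partial recursive function from finite binary strings to
finite binary strings whose domain is a prefix-free set. -/
structure Computer where
  f : List Bool →. List Bool
  partrec : Partrec f
  prefixFree : PrefixFree {p | (f p).Dom}

/-- The domain of a computer. -/
def Computer.domain (C : Computer) : Set (List Bool) := {p | (C.f p).Dom}

/-- A computer `U` is optimal if every computer can be simulated on `U` with
only a constant increase in program length. -/
def IsOptimal (U : Computer) : Prop :=
  ∀ C : Computer, ∃ d : ℕ, ∀ p : List Bool, (C.f p).Dom →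
    ∃ p' : List Bool, p'.length ≤ p.length + d ∧ ∀ s, s ∈ C.f p → s ∈ U.f p'

/-- Program-size complexity `H(s)`: the minimal length of a program `p`
with `U(p) = s`. -/
noncomputable def H (U : Computer) (s : List Bool) : ℕ :=
  sInf {n | ∃ p : List Bool, p.length = n ∧ s ∈ U.f p}

/-- The `n`-th bit (`n ≥ 1`) of the base-two expansion of `x mod 1`
(the expansion chosen with infinitely many zeros). -/
noncomputable def binDigit (x : ℝ) (n : ℕ) : Bool :=
  decide (⌊Int.fract x * 2 ^ n⌋ % 2 = 1)

/-- The first `n` bits of the base-two expansion of `x mod 1` (with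
infinitely many zeros). -/
noncomputable def bits (x : ℝ) (n : ℕ) : List Bool :=
  (List.range n).map fun i => binDigit x (i + 1)

/-- A real `x` is weakly Chaitin `D`-random (w.r.t. the computer `U`). -/
def WeaklyChaitinRandom (U : Computer) (D x : ℝ) : Prop :=
  ∃ c : ℝ, ∀ n : ℕ, 1 ≤ n → D * n - c ≤ (H U (bits x n) : ℝ)

/-- A real `x` is Chaitin `D`-random (w.r.t. the computer `U`). -/
def ChaitinRandom (U : Computer) (D x : ℝ) : Prop :=
  Tendsto (fun n : ℕ => (H U (bits x n) : ℝ) - D * n) atTop atTop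

/-- A real `x` is `D`-compressible (w.r.t. the computer `U`). -/
def DCompressible (U : Computer) (D x : ℝ) : Prop :=
  Filter.limsup (fun n : ℕ => (H U (bits x n) : ℝ) / n) atTop ≤ D

/-- A computable real number. -/
def ComputableReal (T : ℝ) : Prop :=
  ∃ f : ℕ → ℚ, Computable f ∧ ∀ n : ℕ, 1 ≤ n → |T - (f n : ℝ)| < 1 / n

/-- A right-computable real number. -/
def RightComputable (T : ℝ) : Prop :=
  ∃ g : ℕ → ℚ, Computable g ∧ (∀ n, T ≤ (g n : ℝ)) ∧
    Tendsto (fun n => ((g n : ℚ) : ℝ)) atTop (nhds T)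

/-- A left-computable real number. -/
def LeftComputable (T : ℝ) : Prop := RightComputable (-T)

/-- The term `2 ^ (-|p| / T)` of the partition function `Z(T)`. -/
noncomputable def zterm (U : Computer) (T : ℝ) (p : U.domain) : ℝ :=
  (2 : ℝ) ^ (-((p : List Bool).length : ℝ) / T)

/-- The term `|p| ^ Q * 2 ^ (-|p| / T)` of `W(Q,T)`. -/
noncomputable def wterm (U : Computer) (Q T : ℝ) (p : U.domain) : ℝ :=
  ((p : List Bool).length : ℝ) ^ Q * (2 : ℝ) ^ (-((p : List Bool).length : ℝ) / T)

/-- The term `|p| * 2 ^ (-|p| / T)` of `W(1,T)`. -/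
noncomputable def wlterm (U : Computer) (T : ℝ) (p : U.domain) : ℝ :=
  ((p : List Bool).length : ℝ) * (2 : ℝ) ^ (-((p : List Bool).length : ℝ) / T)

/-- The term `|p| ^ 2 * 2 ^ (-|p| / T)` of `W(2,T)`. -/
noncomputable def wsqterm (U : Computer) (T : ℝ) (p : U.domain) : ℝ :=
  ((p : List Bool).length : ℝ) ^ 2 * (2 : ℝ) ^ (-((p : List Bool).length : ℝ) / T)

/-- A lower-computable function `f : ℕ⁺ → [0,∞)` (represented on `ℕ`,
with all conditions imposed on positive arguments). -/
def LowerComputableFun (f : ℕ → ℝ) : Prop :=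
  ∃ a : ℕ → ℕ → ℚ, Computable₂ a ∧
    (∀ k n : ℕ, 1 ≤ k → 1 ≤ n → (a k n : ℝ) ≤ f n) ∧
    (∀ n : ℕ, 1 ≤ n → Tendsto (fun k => ((a k n : ℚ) : ℝ)) atTop (nhds (f n)))

/-- A lower-computable semi-measure on finite binary strings. -/
def LowerComputableSemiMeasure (r : List Bool → ℝ) : Prop :=
  (∀ s, 0 ≤ r s) ∧ (∀ s, r s ≤ 1) ∧ Summable r ∧ (∑' s, r s) ≤ 1 ∧
    ∃ f : ℕ → List Bool → ℚ, Computable₂ f ∧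
      (∀ n s, ((f n s : ℚ) : ℝ) ≤ r s) ∧
      (∀ s, Tendsto (fun n => ((f n s : ℚ) : ℝ)) atTop (nhds (r s)))

/-- A universal probability. -/
def UniversalProbability (m : List Bool → ℝ) : Prop :=
  LowerComputableSemiMeasure m ∧
    ∀ r : List Bool → ℝ, LowerComputableSemiMeasure r →
      ∃ c : ℝ, 0 < c ∧ ∀ s, c * r s ≤ m s


section

attribute [fun_prop] Computable
attribute [fun_prop] Computable.id Computable.const Computable.comp Computable.fst Computable.snd
  Computable.pair Computable.list_length Computable.cond

section comp
variable {α β : Type*} [Primcodable α] [Primcodable β]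

@[fun_prop] theorem cpt_add {f g : α → ℕ} (hf : Computable f) (hg : Computable g) :
    Computable (fun a => f a + g a) := Primrec.nat_add.to_comp.comp hf hg
@[fun_prop] theorem cpt_sub {f g : α → ℕ} (hf : Computable f) (hg : Computable g) :
    Computable (fun a => f a - g a) := Primrec.nat_sub.to_comp.comp hf hg
@[fun_prop] theorem cpt_mul {f g : α → ℕ} (hf : Computable f) (hg : Computable g) :
    Computable (fun a => f a * g a) := Primrec.nat_mul.to_comp.comp hf hg
@[fun_prop] theorem cpt_div {f g : α → ℕ} (hf : Computable f) (hg : Computable g) :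
    Computable (fun a => f a / g a) := Primrec.nat_div.to_comp.comp hf hg
@[fun_prop] theorem cpt_mod {f g : α → ℕ} (hf : Computable f) (hg : Computable g) :
    Computable (fun a => f a % g a) := Primrec.nat_mod.to_comp.comp hf hg
@[fun_prop] theorem cpt_dle {f g : α → ℕ} (hf : Computable f) (hg : Computable g) :
    Computable (fun a => decide (f a ≤ g a)) := Primrec.nat_le.decide.to_comp.comp hf hg
@[fun_prop] theorem cpt_dlt {f g : α → ℕ} (hf : Computable f) (hg : Computable g) :
    Computable (fun a => decide (f a < g a)) := Primrec.nat_lt.decide.to_comp.comp hf hg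
@[fun_prop] theorem cpt_deq [DecidableEq β] {f g : α → β} (hf : Computable f) (hg : Computable g) :
    Computable (fun a => decide (f a = g a)) := Primrec.eq.decide.to_comp.comp hf hg
@[fun_prop] theorem cpt_and {f g : α → Bool} (hf : Computable f) (hg : Computable g) :
    Computable (fun a => f a && g a) := Primrec.and.to_comp.comp hf hg
attribute [fun_prop] Computable.unpair
@[fun_prop] theorem cpt_len {f : α → List β} (hf : Computable f) :
    Computable (fun a => (f a).length) := Computable.list_length.comp hf

theorem cpt_rec {f : α → ℕ} {g : α → β} {h : α → ℕ → β → β} (hf : Computable f)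
    (hg : Computable g) (hh : Computable (fun p : α × ℕ × β => h p.1 p.2.1 p.2.2)) :
    Computable (fun a => Nat.rec (motive := fun _ => β) (g a) (fun n b => h a n b) (f a)) := by
  have := Computable.nat_rec (h := fun a (p : ℕ × β) => h a p.1 p.2) hf hg hh
  exact this

theorem cpt_find {P : α → ℕ → Bool} (hP : Computable (fun p : α × ℕ => P p.1 p.2))
    (hex : ∀ a, ∃ n, P a n = true) : ∃ F : α → ℕ, Computable F ∧
      ∀ a, P a (F a) = true ∧ ∀ m < F a, P a m = false := by
  have h1 : Partrec fun a => Nat.rfind (P a : ℕ →. Bool) :=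
    Partrec.rfind (p := fun a => (P a : ℕ →. Bool)) (Computable.partrec hP)
  refine ⟨fun a => Nat.find (hex a), h1.of_eq_tot fun a => ?_, fun a => ⟨Nat.find_spec (hex a),
    fun m hm => by simpa using Nat.find_min (hex a) hm⟩⟩
  refine Nat.mem_rfind.2 ⟨?_, fun {m} hm => ?_⟩
  · have := Nat.find_spec (hex a)
    exact Part.mem_some_iff.2 this.symm
  · have := Nat.find_min (hex a) hm
    exact Part.mem_some_iff.2 (by simpa using this)
theorem cpt_nsum {f : α → ℕ → ℕ} {g : α → ℕ} (hf : Computable (fun p : α × ℕ => f p.1 p.2))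
    (hg : Computable g) : Computable (fun a => ∑ i ∈ Finset.range (g a), f a i) := by
  have : Computable (fun a => Nat.rec (motive := fun _ => ℕ) 0 (fun i b => b + f a i) (g a)) := by
    refine cpt_rec hg (Computable.const 0) (h := fun a i b => b + f a i) ?_
    fun_prop
  refine this.of_eq fun a => ?_
  induction g a with
  | zero => simp
  | succ n ih => simp only [ih, Finset.sum_range_succ]

end comp

section rat
open Encodable Denumerable

/-- The structural (non-bijective) code of a rational. -/
def ratE (q : ℚ) : ℕ := @Encodable.encode ℚ Rat.instEncodable q

theorem encode_int_eq (z : ℤ) : @Encodable.encode ℤ Int.encodable z = Equiv.intEquivNat z := rfl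

theorem ratE_eq (q : ℚ) : ratE q = Nat.pair (Equiv.intEquivNat q.num) q.den := rfl

theorem intEquivNat_ofNat (n : ℕ) : Equiv.intEquivNat (Int.ofNat n) = 2 * n := by
  show Nat.bit false n = 2 * n
  simp [Nat.bit]

theorem intEquivNat_negSucc (n : ℕ) : Equiv.intEquivNat (Int.negSucc n) = 2 * n + 1 := by
  show Nat.bit true n = 2 * n + 1
  simp [Nat.bit]

theorem intEquivNat_natAbs (z : ℤ) : z.natAbs = (Equiv.intEquivNat z + 1) / 2 := by
  cases z with
  | ofNat n => rw [intEquivNat_ofNat, Int.natAbs_ofNat']; omega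
  | negSucc n => rw [intEquivNat_negSucc, Int.natAbs_negSucc]; omega

theorem intEquivNat_pos (z : ℤ) : z = if Equiv.intEquivNat z % 2 = 0 then
    ((Equiv.intEquivNat z / 2 : ℕ) : ℤ) else -(((Equiv.intEquivNat z + 1) / 2 : ℕ) : ℤ) := by
  cases z with
  | ofNat n => rw [intEquivNat_ofNat, Int.ofNat_eq_natCast]; split_ifs <;> omega
  | negSucc n => rw [intEquivNat_negSucc, Int.negSucc_eq]; split_ifs <;> omega

theorem mem_range_ratE (x : ℕ) : x ∈ Set.range ratE ↔
    0 < x.unpair.2 ∧ Nat.Coprime ((x.unpair.1 + 1) / 2) x.unpair.2 := by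
  constructor
  · rintro ⟨q, rfl⟩
    rw [ratE_eq]
    simp only [Nat.unpair_pair]
    refine ⟨q.den_pos, ?_⟩
    rw [← intEquivNat_natAbs]; exact q.reduced
  · rintro ⟨h1, h2⟩
    refine ⟨⟨Equiv.intEquivNat.symm x.unpair.1, x.unpair.2, h1.ne', ?_⟩, ?_⟩
    · rw [intEquivNat_natAbs]; simpa using h2
    · rw [ratE_eq]; simp

theorem coprime_iff_lt (a b : ℕ) (hb : 0 < b) : Nat.Coprime a b ↔
    ∀ e < b + 1, ¬ (e ≠ 1 ∧ a % e = 0 ∧ b % e = 0) := by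
  constructor
  · rintro h e he ⟨h1, h2, h3⟩
    exact h1 (Nat.eq_one_of_dvd_coprimes h (Nat.dvd_of_mod_eq_zero h2) (Nat.dvd_of_mod_eq_zero h3))
  · intro h
    by_contra hc
    refine h (a.gcd b) (Nat.lt_succ_of_le (Nat.gcd_le_right _ hb)) ⟨hc, ?_, ?_⟩
    · exact Nat.mod_eq_zero_of_dvd (Nat.gcd_dvd_left _ _)
    · exact Nat.mod_eq_zero_of_dvd (Nat.gcd_dvd_right _ _)

/-- Boolean test for being the code of a rational. -/
noncomputable def ratS (x : ℕ) : Bool := @decide (x ∈ Set.range ratE) (Classical.dec _)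

theorem ratS_iff (x : ℕ) : ratS x = true ↔ x ∈ Set.range ratE := by simp [ratS]

theorem cpt_ratS : Computable ratS := by
  have h1 : Computable (fun x : ℕ => x.unpair.1) := Computable.fst.comp Computable.unpair
  have h2 : Computable (fun x : ℕ => x.unpair.2) := Computable.snd.comp Computable.unpair
  have h6 : Computable (fun p : ℕ × ℕ => (bif decide (p.2 = 1) then 0 else
      bif decide (((p.1.unpair.1 + 1) / 2) % p.2 = 0) then
        bif decide (p.1.unpair.2 % p.2 = 0) then 1 else 0 else 0)) := by
    have h1' := h1.comp (Computable.fst (α := ℕ) (β := ℕ))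
    have h2' := h2.comp (Computable.fst (α := ℕ) (β := ℕ))
    exact Computable.cond (cpt_deq Computable.snd (Computable.const 1)) (Computable.const 0)
      (Computable.cond (cpt_deq (cpt_mod (cpt_div (cpt_add h1' (Computable.const 1))
        (Computable.const 2)) Computable.snd) (Computable.const 0))
        (Computable.cond (cpt_deq (cpt_mod h2' Computable.snd) (Computable.const 0))
          (Computable.const 1) (Computable.const 0)) (Computable.const 0))
  have h4 := cpt_nsum (f := fun x e => (bif decide (e = 1) then 0 else
      bif decide (((x.unpair.1 + 1) / 2) % e = 0) then
        bif decide (x.unpair.2 % e = 0) then 1 else 0 else 0)) h6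
        (cpt_add h2 (Computable.const 1))
  have h5 : Computable (fun x : ℕ => decide (0 < x.unpair.2)) := cpt_dlt (Computable.const 0) h2
  refine (cpt_and h5 (cpt_deq h4 (Computable.const 0))).of_eq fun x => ?_
  rw [Bool.eq_iff_iff, ratS_iff]
  simp only [Bool.and_eq_true, decide_eq_true_eq, mem_range_ratE]
  refine and_congr_right fun h => ?_
  rw [coprime_iff_lt _ _ h, Finset.sum_eq_zero_iff]
  refine forall_congr' fun e => ?_
  rw [Finset.mem_range]
  refine imp_congr_right fun _ => ?_
  by_cases h1 : e = 1 <;> by_cases h2 : ((x.unpair.1 + 1) / 2) % e = 0 <;>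
    by_cases h3 : x.unpair.2 % e = 0 <;> simp [h1, h2, h3]

/-- The `n`-th rational. -/
def ratN (n : ℕ) : ℚ := Denumerable.ofNat ℚ n
/-- The index of a rational. -/
def ratI (q : ℚ) : ℕ := @Encodable.encode ℚ Primcodable.toEncodable q
theorem ratN_ratI (q : ℚ) : ratN (ratI q) = q := Denumerable.ofNat_encode q
@[fun_prop] theorem cpt_ratN : Computable ratN := Computable.ofNat ℚ
@[fun_prop] theorem cpt_ratI : Computable ratI := Computable.encode

/-- code of the `n`-th rational. -/
def ratPhi (n : ℕ) : ℕ := ratE (ratN n)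

theorem ratPhi_succ (n : ℕ) : ∃ m, ratPhi (n+1) = ratPhi n + m + 1 ∧
    ratS (ratPhi n + m + 1) = true ∧ ∀ m' < m, ratS (ratPhi n + m' + 1) = false := by
  let _ := @Encodable.decidableRangeEncode ℚ Rat.instEncodable
  let _ : Infinite (Set.range (@Encodable.encode ℚ Rat.instEncodable)) :=
    Infinite.of_injective _ (Equiv.ofInjective _ (@Encodable.encode_injective ℚ Rat.instEncodable)).injective
  have key : ∀ n, ratPhi n = (Nat.Subtype.ofNat (Set.range (@Encodable.encode ℚ Rat.instEncodable)) n : ℕ) := by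
    intro n
    have h : ratN n = (@Encodable.equivRangeEncode ℚ Rat.instEncodable).symm
        (Nat.Subtype.ofNat (Set.range (@Encodable.encode ℚ Rat.instEncodable)) n) := by
      apply Denumerable.ofNat_of_decode
      rfl
    unfold ratPhi
    rw [h]
    have := (@Encodable.equivRangeEncode ℚ Rat.instEncodable).apply_symm_apply
        (Nat.Subtype.ofNat (Set.range (@Encodable.encode ℚ Rat.instEncodable)) n)
    exact congrArg Subtype.val this
  have hex := Nat.Subtype.exists_succ (Nat.Subtype.ofNat (Set.range (@Encodable.encode ℚ Rat.instEncodable)) n)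
  have hs : ∀ x, ratS x = true ↔ x ∈ Set.range (@Encodable.encode ℚ Rat.instEncodable) := ratS_iff
  refine ⟨Nat.find hex, ?_, ?_, ?_⟩
  · rw [key (n+1), key n, Nat.Subtype.ofNat, Nat.Subtype.succ]
  · rw [hs, key]; exact Nat.find_spec hex
  · intro m' hm'
    have := Nat.find_min hex hm'
    rw [← key, ← hs] at this
    simpa using this

theorem cpt_ratPhi : Computable ratPhi := by
  have hlt : ∀ n, ratPhi n < ratPhi (n+1) := fun n => by
    obtain ⟨m, h, _⟩ := ratPhi_succ n; omega
  have hge : ∀ n, n ≤ ratPhi n := fun n => by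
    induction n with
    | zero => omega
    | succ n ih => have := hlt n; omega
  have hex' : ∀ x : ℕ, ∃ m, ratS (x + m + 1) = true := by
    intro x
    refine ⟨ratPhi (x+1) - x - 1, ?_⟩
    have := hge (x+1)
    rw [ratS_iff, show x + (ratPhi (x+1) - x - 1) + 1 = ratPhi (x+1) by omega]
    exact ⟨_, rfl⟩
  obtain ⟨F, hF, hF2⟩ := cpt_find (P := fun x m => ratS (x+m+1))
    (cpt_ratS.comp (g := fun p : ℕ × ℕ => p.1 + p.2 + 1) (by fun_prop)) hex'
  have : Computable (fun n : ℕ => Nat.rec (motive := fun _ => ℕ) (ratPhi 0)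
      (fun _ b => b + F b + 1) n) := by
    refine cpt_rec (h := fun _ _ b => b + F b + 1) (by fun_prop) (by fun_prop) ?_
    fun_prop
  refine this.of_eq fun n => ?_
  induction n with
  | zero => rfl
  | succ n ih =>
    simp only [ih]
    obtain ⟨m, h1, h2, h3⟩ := ratPhi_succ n
    rw [h1]
    obtain ⟨h4, h5⟩ := hF2 (ratPhi n)
    rcases lt_trichotomy m (F (ratPhi n)) with h | h | h
    · rw [h5 _ h] at h2; simp at h2
    · rw [h]
    · rw [h3 _ h] at h4; simp at h4

@[fun_prop] theorem cpt_ratE : Computable ratE := by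
  have : Computable (fun q : ℚ => ratPhi (ratI q)) := cpt_ratPhi.comp cpt_ratI
  refine this.of_eq fun q => ?_
  rw [ratPhi, ratN_ratI]

/-- A rational as `(a - b) / c`. -/
def ratA (q : ℚ) : ℕ := bif decide ((ratE q).unpair.1 % 2 = 0) then (ratE q).unpair.1 / 2 else 0
/-- A rational as `(a - b) / c`. -/
def ratB (q : ℚ) : ℕ := bif decide ((ratE q).unpair.1 % 2 = 0) then 0 else ((ratE q).unpair.1 + 1) / 2
/-- A rational as `(a - b) / c`. -/
def ratC (q : ℚ) : ℕ := (ratE q).unpair.2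

@[fun_prop] theorem cpt_ratA : Computable ratA := by unfold ratA; fun_prop
@[fun_prop] theorem cpt_ratB : Computable ratB := by unfold ratB; fun_prop
@[fun_prop] theorem cpt_ratC : Computable ratC := by unfold ratC; fun_prop

attribute [irreducible] ratA ratB ratC ratN ratI

theorem ratC_pos (q : ℚ) : 0 < ratC q := by
  simp [ratC, ratE_eq, q.den_pos]

theorem rat_eq (q : ℚ) : q = ((ratA q : ℚ) - ratB q) / ratC q := by
  have h := intEquivNat_pos q.num
  conv_lhs => rw [← Rat.num_div_den q]
  have h2 : (ratC q) = q.den := by simp [ratC, ratE_eq]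
  have h3 : q.num = (ratA q : ℤ) - ratB q := by
    simp only [ratA, ratB, ratE_eq, Nat.unpair_pair]
    by_cases hc : Equiv.intEquivNat q.num % 2 = 0
    · rw [if_pos hc] at h; simp only [hc, decide_true, cond_true]; omega
    · rw [if_neg hc] at h; simp only [hc, decide_false, cond_false]; omega
  rw [h2, h3]; push_cast; rfl

theorem rat_eq_iff (a b c : ℕ) (hc : 0 < c) (q : ℚ) : ((a : ℚ) - b) / c = q ↔
    a * ratC q + ratB q * c = b * ratC q + ratA q * c := by
  have hc' : (c : ℚ) ≠ 0 := by positivity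
  have hd : (ratC q : ℚ) ≠ 0 := by have := ratC_pos q; positivity
  conv_lhs => rw [rat_eq q]
  rw [div_eq_div_iff hc' hd, ← Nat.cast_inj (R := ℚ)]
  push_cast
  constructor <;> intro h <;> linarith

theorem cpt_ratmk : Computable (fun p : ℕ × ℕ × ℕ => ((p.1 : ℚ) - p.2.1) / ((p.2.2 + 1 : ℕ) : ℚ)) := by
  obtain ⟨F, hF, hF2⟩ := cpt_find (P := fun (p : ℕ × ℕ × ℕ) n => decide (p.1 * ratC (ratN n)
      + ratB (ratN n) * (p.2.2+1) =
      p.2.1 * ratC (ratN n) + ratA (ratN n) * (p.2.2+1)))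
    (by fun_prop) (fun p => ⟨ratI (((p.1 : ℚ) - p.2.1) / ((p.2.2 + 1 : ℕ) : ℚ)), by
      rw [decide_eq_true_eq, ← rat_eq_iff _ _ _ (by omega), ratN_ratI]⟩)
  refine (cpt_ratN.comp hF).of_eq fun p => ?_
  have := (hF2 p).1
  rw [decide_eq_true_eq, ← rat_eq_iff _ _ _ (by omega)] at this
  exact this.symm

variable {α : Type*} [Primcodable α]

theorem cpt_ratmk' {f g h : α → ℕ} (hf : Computable f) (hg : Computable g) (hh : Computable h) :
    Computable (fun a => ((f a : ℚ) - g a) / ((h a + 1 : ℕ) : ℚ)) :=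
  cpt_ratmk.comp (g := fun a => (f a, g a, h a)) (by fun_prop)

@[fun_prop] theorem cpt_qnat {f : α → ℕ} (hf : Computable f) : Computable (fun a => (f a : ℚ)) :=
  (cpt_ratmk' hf (Computable.const 0) (Computable.const 0)).of_eq fun a => by simp

theorem cpt_qof {f g h : α → ℕ} {q : α → ℚ} (hf : Computable f) (hg : Computable g)
    (hh : Computable h) (H : ∀ a, 0 < h a ∧ q a = ((f a : ℚ) - g a) / (h a : ℚ)) :
    Computable q := by
  refine (cpt_ratmk' hf hg (h := fun a => h a - 1) (by fun_prop)).of_eq fun a => ?_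
  rw [Nat.sub_add_cancel (H a).1, (H a).2]

@[fun_prop] theorem cpt_qadd {f g : α → ℚ} (hf : Computable f) (hg : Computable g) :
    Computable (fun a => f a + g a) := by
  refine cpt_qof (f := fun a => ratA (f a) * ratC (g a) + ratA (g a) * ratC (f a))
    (g := fun a => ratB (f a) * ratC (g a) + ratB (g a) * ratC (f a))
    (h := fun a => ratC (f a) * ratC (g a)) (by fun_prop) (by fun_prop) (by fun_prop) fun a => ?_
  have h1 := ratC_pos (f a); have h2 := ratC_pos (g a)
  refine ⟨by positivity, ?_⟩
  conv_lhs => rw [rat_eq (f a), rat_eq (g a)]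
  push_cast; field_simp; ring

@[fun_prop] theorem cpt_qmul {f g : α → ℚ} (hf : Computable f) (hg : Computable g) :
    Computable (fun a => f a * g a) := by
  refine cpt_qof (f := fun a => ratA (f a) * ratA (g a) + ratB (f a) * ratB (g a))
    (g := fun a => ratA (f a) * ratB (g a) + ratB (f a) * ratA (g a))
    (h := fun a => ratC (f a) * ratC (g a)) (by fun_prop) (by fun_prop) (by fun_prop) fun a => ?_
  have h1 := ratC_pos (f a); have h2 := ratC_pos (g a)
  refine ⟨by positivity, ?_⟩
  conv_lhs => rw [rat_eq (f a), rat_eq (g a)]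
  push_cast; field_simp; ring

@[fun_prop] theorem cpt_qneg {f : α → ℚ} (hf : Computable f) :
    Computable (fun a => - f a) := by
  refine (cpt_qmul (Computable.const (-1)) hf).of_eq fun a => by ring

@[fun_prop] theorem cpt_qsub {f g : α → ℚ} (hf : Computable f) (hg : Computable g) :
    Computable (fun a => f a - g a) := by
  simp only [sub_eq_add_neg]; fun_prop

/-- Boolean `≤` on rationals. -/
def qle (x y : ℚ) : Bool := decide (x ≤ y)
theorem qle_iff (x y : ℚ) : qle x y = true ↔ x ≤ y := by simp [qle]

@[fun_prop] theorem cpt_qle {f g : α → ℚ} (hf : Computable f) (hg : Computable g) :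
    Computable (fun a => qle (f a) (g a)) := by
  have : Computable (fun a => decide (ratA (f a) * ratC (g a) + ratB (g a) * ratC (f a) ≤
    ratB (f a) * ratC (g a) + ratA (g a) * ratC (f a))) := by fun_prop
  refine this.of_eq fun a => ?_
  rw [Bool.eq_iff_iff, qle_iff, decide_eq_true_eq]
  have h1 := ratC_pos (f a); have h2 := ratC_pos (g a)
  conv_rhs => rw [rat_eq (f a), rat_eq (g a)]
  rw [div_le_div_iff₀ (by positivity) (by positivity), ← Nat.cast_le (α := ℚ)]
  push_cast
  constructor <;> intro h <;> linarith

@[fun_prop] theorem cpt_qinv {f : α → ℚ} (hf : Computable f) :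
    Computable (fun a => (f a)⁻¹) := by
  -- the inverse of `q` is `q * c^2 / (a-b)^2`
  have h0 : Computable (fun a => ((((ratC (f a) * ratC (f a) : ℕ) : ℚ) - ((0 : ℕ) : ℚ)) /
      ((((ratA (f a) - ratB (f a)) + (ratB (f a) - ratA (f a))) *
        ((ratA (f a) - ratB (f a)) + (ratB (f a) - ratA (f a))) - 1 + 1 : ℕ) : ℚ))) := by
    apply cpt_ratmk' <;> fun_prop
  refine (cpt_qmul hf h0).of_eq fun a => ?_
  by_cases h : f a = 0
  · simp [h]
  have h1 := ratC_pos (f a)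
  have hne : ratA (f a) ≠ ratB (f a) := fun he => h (by rw [rat_eq (f a), he]; simp)
  have hN : ((((ratA (f a) - ratB (f a)) + (ratB (f a) - ratA (f a))) *
        ((ratA (f a) - ratB (f a)) + (ratB (f a) - ratA (f a))) - 1 + 1 : ℕ) : ℚ) =
        ((ratA (f a) : ℚ) - ratB (f a))^2 := by
    rw [Nat.sub_add_cancel]
    · rcases lt_or_gt_of_ne hne with hl | hl
      · rw [Nat.sub_eq_zero_of_le hl.le]; push_cast [Nat.cast_sub hl.le]; ring
      · rw [Nat.sub_eq_zero_of_le hl.le]; push_cast [Nat.cast_sub hl.le]; ring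
    · apply Nat.mul_pos <;> omega
  rw [hN]
  have hne' : (ratA (f a) : ℚ) - ratB (f a) ≠ 0 := by
    rw [sub_ne_zero]; exact_mod_cast hne
  conv_rhs => rw [rat_eq (f a)]
  conv_lhs => enter [1]; rw [rat_eq (f a)]
  push_cast; field_simp; ring

@[fun_prop] theorem cpt_qdiv {f g : α → ℚ} (hf : Computable f) (hg : Computable g) :
    Computable (fun a => f a / g a) := by
  simp only [div_eq_mul_inv]; fun_prop

@[fun_prop] theorem cpt_qpow {f : α → ℚ} {g : α → ℕ} (hf : Computable f) (hg : Computable g) :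
    Computable (fun a => f a ^ g a) := by
  have : Computable (fun a => Nat.rec (motive := fun _ => ℚ) 1 (fun _ b => b * f a) (g a)) := by
    refine cpt_rec hg (Computable.const 1) (h := fun a _ b => b * f a) ?_
    fun_prop
  refine this.of_eq fun a => ?_
  induction g a with
  | zero => simp
  | succ n ih => simp only [ih, pow_succ]

@[fun_prop] theorem cpt_npow {f : α → ℕ} {g : α → ℕ} (hf : Computable f) (hg : Computable g) :
    Computable (fun a => f a ^ g a) := by
  have : Computable (fun a => Nat.rec (motive := fun _ => ℕ) 1 (fun _ b => b * f a) (g a)) := by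
    refine cpt_rec hg (Computable.const 1) (h := fun a _ b => b * f a) ?_
    fun_prop
  refine this.of_eq fun a => ?_
  induction g a with
  | zero => simp
  | succ n ih => simp only [ih, pow_succ]

theorem cpt_qsum {f : α → ℕ → ℚ} {g : α → ℕ} (hf : Computable (fun p : α × ℕ => f p.1 p.2))
    (hg : Computable g) : Computable (fun a => ∑ i ∈ Finset.range (g a), f a i) := by
  have : Computable (fun a => Nat.rec (motive := fun _ => ℚ) 0 (fun i b => b + f a i) (g a)) := by
    refine cpt_rec hg (Computable.const 0) (h := fun a i b => b + f a i) ?_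
    fun_prop
  refine this.of_eq fun a => ?_
  induction g a with
  | zero => simp
  | succ n ih => simp only [ih, Finset.sum_range_succ]

@[fun_prop] theorem cpt_qfloor {f : α → ℚ} (hf : Computable f) :
    Computable (fun a => ⌊f a⌋₊) := by
  have : Computable (fun a => (ratA (f a) - ratB (f a)) / ratC (f a)) := by fun_prop
  refine this.of_eq fun a => ?_
  conv_rhs => rw [rat_eq (f a)]
  rcases le_total (ratB (f a)) (ratA (f a)) with h | h
  · rw [← Nat.cast_sub h, Nat.floor_div_natCast, Nat.floor_natCast]
  · rw [Nat.sub_eq_zero_of_le h, Nat.zero_div, eq_comm, Nat.floor_eq_zero]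
    refine lt_of_le_of_lt (div_nonpos_of_nonpos_of_nonneg ?_ (by positivity)) one_pos
    rw [sub_nonpos]; exact_mod_cast h

end rat

end


/-- A positive real with computable positive rational lower and upper approximations. -/
def CRp (x : ℝ) : Prop := ∃ lo hi : ℕ → ℚ, Computable lo ∧ Computable hi ∧ (∀ n, 0 < lo n) ∧
  (∀ n, (lo n : ℝ) ≤ x) ∧ (∀ n, x ≤ (hi n : ℝ)) ∧
  Tendsto (fun n => (lo n : ℝ)) atTop (nhds x) ∧ Tendsto (fun n => (hi n : ℝ)) atTop (nhds x)

theorem CRp_mk {x : ℝ} (hx : 0 < x) (lo hi : ℕ → ℚ) (hlo : Computable lo) (hhi : Computable hi)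
    (h1 : ∀ n, (lo n : ℝ) ≤ x) (h2 : ∀ n, x ≤ (hi n : ℝ))
    (h3 : Tendsto (fun n => (lo n : ℝ)) atTop (nhds x))
    (h4 : Tendsto (fun n => (hi n : ℝ)) atTop (nhds x)) : CRp x := by
  obtain ⟨N, hN⟩ := eventually_atTop.1 (h3.eventually (lt_mem_nhds hx))
  refine ⟨fun n => lo (n + N), fun n => hi (n + N), by fun_prop, by fun_prop, fun n => ?_,
    fun n => h1 _, fun n => h2 _, (tendsto_add_atTop_iff_nat N).2 h3,
    (tendsto_add_atTop_iff_nat N).2 h4⟩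
  exact_mod_cast hN (n + N) (by omega)

theorem CRp_pos {x : ℝ} (h : CRp x) : 0 < x := by
  obtain ⟨lo, hi, _, _, h0, h1, _⟩ := h
  exact lt_of_lt_of_le (by exact_mod_cast h0 0) (h1 0)

theorem CRp_div {x y : ℝ} (hx : CRp x) (hy : CRp y) : CRp (x / y) := by
  have hx0 := CRp_pos hx
  have hy0 := CRp_pos hy
  obtain ⟨lo, hi, c1, c2, h0, h1, h2, h3, h4⟩ := hx
  obtain ⟨lo', hi', c1', c2', h0', h1', h2', h3', h4'⟩ := hy
  refine CRp_mk (by positivity) (fun n => lo n / hi' n) (fun n => hi n / lo' n) (by fun_prop)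
    (by fun_prop) (fun n => ?_) (fun n => ?_) ?_ ?_
  · push_cast
    exact div_le_div₀ hx0.le (h1 n) hy0 (h2' n)
  · push_cast
    have : (0:ℝ) < lo' n := by exact_mod_cast h0' n
    exact div_le_div₀ (hx0.le.trans (h2 n)) (h2 n) this (h1' n)
  · push_cast
    exact h3.div h4' hy0.ne'
  · push_cast
    exact h4.div h3' hy0.ne'

theorem CRp_of_computable {T : ℝ} (hT : 0 < T) (h : ComputableReal T) : CRp T := by
  obtain ⟨f, hf, h⟩ := h
  have hh : ∀ n : ℕ, |T - (f (n+1) : ℝ)| < 1 / ((n : ℝ) + 1) := fun n => by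
    simpa using h (n+1) (by omega)
  have h0 : Tendsto (fun n : ℕ => 1 / ((n : ℝ) + 1)) atTop (nhds 0) :=
    tendsto_one_div_add_atTop_nhds_zero_nat
  have h00 : Tendsto (fun n : ℕ => (f (n+1) : ℝ)) atTop (nhds T) := by
    rw [tendsto_iff_dist_tendsto_zero]
    refine squeeze_zero (fun _ => dist_nonneg) (fun n => ?_) h0
    rw [Real.dist_eq, abs_sub_comm]; exact (hh n).le
  refine CRp_mk hT (fun n => f (n+1) - 1 / ((n+1 : ℕ) : ℚ)) (fun n => f (n+1) + 1 / ((n+1 : ℕ) : ℚ))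
    (by fun_prop) (by fun_prop) (fun n => ?_) (fun n => ?_) ?_ ?_
  · have := abs_lt.1 (hh n); push_cast; linarith
  · have := abs_lt.1 (hh n); push_cast; linarith
  · push_cast; simpa using h00.sub h0
  · push_cast; simpa using h00.add h0

theorem CRp_log2 : CRp (Real.log 2) := by
  set S : ℕ → ℚ := fun n => ∑ i ∈ Finset.range n, (1/2 : ℚ)^(i+1) / ((i + 1 : ℕ) : ℚ) with hS
  have hc : Computable S := by
    refine cpt_qsum (f := fun _ i => (1/2 : ℚ)^(i+1) / ((i + 1 : ℕ) : ℚ)) ?_ ?_ <;> fun_prop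
  have hh : ∀ n : ℕ, |(S n : ℝ) - Real.log 2| ≤ (1/2)^n := fun n => by
    have := Real.abs_log_sub_add_sum_range_le (x := 1/2) (by norm_num [abs_lt]) n
    have e1 : Real.log (1 - 1/2) = - Real.log 2 := by
      rw [show (1 - 1/2 : ℝ) = 2⁻¹ by norm_num, Real.log_inv]
    have e2 : |(1/2 : ℝ)| = 1/2 := by norm_num
    rw [e1, e2] at this
    have e3 : ((1/2 : ℝ))^(n+1) / (1 - 1/2) = (1/2)^n := by rw [pow_succ]; ring
    rw [e3] at this
    have e4 : (S n : ℝ) = ∑ i ∈ Finset.range n, (1/2 : ℝ)^(i+1) / ((i : ℝ) + 1) := by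
      rw [hS]; push_cast; rfl
    rw [e4, sub_eq_add_neg]; exact this
  have h0 : Tendsto (fun n : ℕ => (1/2 : ℝ)^n) atTop (nhds 0) :=
    tendsto_pow_atTop_nhds_zero_of_lt_one (by norm_num) (by norm_num)
  have h00 : Tendsto (fun n : ℕ => (S n : ℝ)) atTop (nhds (Real.log 2)) := by
    rw [tendsto_iff_dist_tendsto_zero]
    refine squeeze_zero (fun _ => dist_nonneg) (fun n => ?_) h0
    rw [Real.dist_eq]; exact (hh n)
  refine CRp_mk (Real.log_pos (by norm_num)) (fun n => S n - (1/2 : ℚ)^n) (fun n => S n + (1/2:ℚ)^n)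
    (by fun_prop) (by fun_prop) (fun n => ?_) (fun n => ?_) ?_ ?_
  · have := abs_le.1 (hh n); push_cast; linarith
  · have := abs_le.1 (hh n); push_cast; linarith
  · push_cast; simpa using h00.sub h0
  · push_cast; simpa using h00.add h0

theorem CRp_exp {y : ℝ} (hy : CRp y) : CRp (Real.exp (-y)) := by
  have hy0 := CRp_pos hy
  obtain ⟨lo, hi, c1, c2, h0, h1, h2, h3, h4⟩ := hy
  obtain ⟨M, hM⟩ : ∃ M : ℕ, ∀ n, n ≥ M → (hi n : ℝ) ≤ M := by
    obtain ⟨N, hN⟩ := eventually_atTop.1 (h4.eventually (gt_mem_nhds (show y < y + 1 by linarith)))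
    obtain ⟨K, hK⟩ := exists_nat_ge (y+1)
    refine ⟨max N K, fun n hn => (hN n (le_trans (le_max_left _ _) hn)).le.trans (hK.trans ?_)⟩
    exact_mod_cast le_max_right _ _
  -- tendsto facts
  have t1 : Tendsto (fun n : ℕ => (1 + (-(hi n : ℝ)) / n)^n) atTop (nhds (Real.exp (-y))) := by
    apply Real.tendsto_one_add_pow_exp_of_tendsto
    refine (h4.neg).congr' ?_
    filter_upwards [eventually_gt_atTop 0] with n hn
    field_simp
  have t2 : Tendsto (fun n : ℕ => (1 + (lo n : ℝ) / n)^n) atTop (nhds (Real.exp y)) := by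
    apply Real.tendsto_one_add_pow_exp_of_tendsto
    refine h3.congr' ?_
    filter_upwards [eventually_gt_atTop 0] with n hn
    field_simp
  refine CRp_mk (Real.exp_pos _) (fun n => (1 - hi (n + (M+1)) / ((n + (M+1) : ℕ) : ℚ))^(n + (M+1)))
    (fun n => ((1 + lo (n + (M+1)) / ((n + (M+1) : ℕ) : ℚ))^(n + (M+1)))⁻¹) (by fun_prop) (by fun_prop)
    (fun n => ?_) (fun n => ?_) ?_ ?_
  · have hp : (0:ℝ) < ((n + (M+1) : ℕ) : ℝ) := by positivity
    have hle : (hi (n + (M+1)) : ℝ) / ((n + (M+1) : ℕ) : ℝ) ≤ 1 := by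
      rw [div_le_one hp]
      refine (hM _ (by omega)).trans ?_
      exact_mod_cast (by omega)
    have := Real.one_sub_div_pow_le_exp_neg (n := n + (M+1)) (t := hi (n + (M+1))) (by
      rwa [div_le_one hp] at hle)
    rw [Rat.cast_pow, Rat.cast_sub, Rat.cast_div, Rat.cast_one, Rat.cast_natCast]
    refine this.trans ?_
    exact Real.exp_le_exp.2 (neg_le_neg (h2 _))
  · rw [Rat.cast_inv, Rat.cast_pow, Rat.cast_add, Rat.cast_div, Rat.cast_one, Rat.cast_natCast,
      Real.exp_neg]
    have hl : (0:ℝ) < lo (n + (M+1)) := by exact_mod_cast h0 _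
    have hp : (0:ℝ) < ((n + (M+1) : ℕ) : ℝ) := by positivity
    apply inv_anti₀ (by positivity)
    have h5 : (1 + (lo (n + (M+1)) : ℝ) / ((n + (M+1) : ℕ) : ℝ)) ≤
        Real.exp ((lo (n + (M+1)) : ℝ) / ((n + (M+1) : ℕ) : ℝ)) := by
      have := Real.add_one_le_exp ((lo (n + (M+1)) : ℝ) / ((n + (M+1) : ℕ) : ℝ)); linarith
    calc _ ≤ _ := pow_le_pow_left₀ (by positivity) h5 _
      _ = Real.exp (lo (n + (M+1))) := by
        rw [← Real.exp_nat_mul]; congr 1; field_simp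
      _ ≤ _ := Real.exp_le_exp.2 (h1 _)
  · have := (tendsto_add_atTop_iff_nat (M+1)).2 t1
    refine this.congr fun n => ?_
    push_cast; congr 1; ring
  · have := ((tendsto_add_atTop_iff_nat (M+1)).2 t2).inv₀ (Real.exp_pos _).ne'
    rw [← Real.exp_neg] at this
    refine this.congr fun n => ?_
    push_cast; rfl

theorem CRp_beta {T : ℝ} (hT : CRp T) : CRp (Real.exp (-(Real.log 2 / T))) :=
  CRp_exp (CRp_div CRp_log2 hT)
theorem CRp_gamma {T : ℝ} (hT : CRp T) : CRp (Real.log 2 / T ^ 2) := by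
  have := CRp_div (CRp_div CRp_log2 hT) hT
  rwa [div_div, ← sq] at this


theorem exists_enum (U : Computer) : ∃ e : ℕ → Option (List Bool × List Bool), Computable e ∧
    (∀ i p s, e i = some (p, s) → s ∈ U.f p) ∧
    (∀ p s, s ∈ U.f p → ∃ i, e i = some (p, s)) ∧
    (∀ i j p s t, e i = some (p, s) → e j = some (p, t) → i = j) := by
  obtain ⟨c, hc⟩ := Nat.Partrec.Code.exists_code.1 U.partrec
  have hev : ∀ p y, y ∈ Nat.Partrec.Code.eval c (Encodable.encode p) ↔
      ∃ s, s ∈ U.f p ∧ Encodable.encode s = y := by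
    intro p y
    rw [hc]; simp
  let st : ℕ → ℕ → Option ℕ := fun k n => Nat.Partrec.Code.evaln k c n
  have hst : Computable (fun p : ℕ × ℕ => st p.1 p.2) :=
    Nat.Partrec.Code.primrec_evaln.to_comp.comp
      (((Computable.fst (α := ℕ) (β := ℕ)).pair (Computable.const c)).pair Computable.snd)
  have hu1 : Computable (fun i : ℕ => i.unpair.1) := Computable.fst.comp Computable.unpair
  have hu2 : Computable (fun i : ℕ => i.unpair.2) := Computable.snd.comp Computable.unpair
  let e : ℕ → Option (List Bool × List Bool) := fun i =>
    bif (st i.unpair.1 i.unpair.2).isSome then none else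
      (Encodable.decode₂ (List Bool) i.unpair.2).bind fun p =>
        (st (i.unpair.1 + 1) i.unpair.2).bind fun y =>
          (Encodable.decode (α := List Bool) y).map fun s => (p, s)
  have he : Computable e := by
    have a1 : Computable (fun i : ℕ => st i.unpair.1 i.unpair.2) := hst.comp (hu1.pair hu2)
    have a2 : Computable (fun i : ℕ => st (i.unpair.1 + 1) i.unpair.2) :=
      hst.comp ((cpt_add hu1 (Computable.const 1)).pair hu2)
    refine Computable.cond (Primrec.option_isSome.to_comp.comp a1) (Computable.const none) ?_
    refine Computable.option_bind (Primrec.decode₂.to_comp.comp hu2) ?_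
    refine Computable.option_bind (α := ℕ × List Bool)
      (f := fun q => st (q.1.unpair.1 + 1) q.1.unpair.2)
      (g := fun q y => (Encodable.decode (α := List Bool) y).map fun s => (q.2, s))
      (a2.comp Computable.fst) ?_
    refine Computable.option_map (α := (ℕ × List Bool) × ℕ)
      (f := fun q => Encodable.decode (α := List Bool) q.2) (g := fun q s => (q.1.2, s))
      (Computable.decode.comp Computable.snd) ?_
    exact (Computable.snd.comp (Computable.fst.comp Computable.fst)).pair Computable.snd
  have hspec : ∀ i p s, e i = some (p, s) ↔ (Encodable.encode p = i.unpair.2 ∧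
      st i.unpair.1 i.unpair.2 = none ∧ ∃ y, st (i.unpair.1 + 1) i.unpair.2 = some y ∧
      Encodable.decode (α := List Bool) y = some s) := by
    intro i p s
    simp only [e]
    rcases h : st i.unpair.1 i.unpair.2 with _ | z
    · simp only [Option.isSome_none, cond_false, Option.bind_eq_some_iff, Option.map_eq_some_iff,
        Encodable.decode₂_eq_some, Prod.mk.injEq]
      constructor
      · rintro ⟨p', h1, y, h2, s', h3, rfl, rfl⟩
        exact ⟨h1, trivial, y, h2, h3⟩
      · rintro ⟨h1, _, y, h2, h3⟩
        exact ⟨p, h1, y, h2, s, h3, rfl, rfl⟩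
    · simp
  have hsound : ∀ i p s, e i = some (p, s) → s ∈ U.f p := by
    intro i p s h
    obtain ⟨h1, h2, y, h3, h4⟩ := (hspec i p s).1 h
    rw [← h1] at h3
    obtain ⟨s', hs', rfl⟩ := (hev p y).1 (Nat.Partrec.Code.evaln_sound h3)
    rw [Encodable.encodek] at h4
    rwa [← Option.some.inj h4]
  refine ⟨e, he, hsound, ?_, ?_⟩
  · intro p s hs
    have h1 := (hev p _).2 ⟨s, hs, rfl⟩
    have hex := Nat.Partrec.Code.evaln_complete.1 h1
    have hm := Nat.find_spec hex
    obtain ⟨k, hk⟩ : ∃ k, Nat.find hex = k + 1 := by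
      rcases hh : Nat.find hex with _ | k
      · rw [hh] at hm; simp [Nat.Partrec.Code.evaln] at hm
      · exact ⟨k, rfl⟩
    refine ⟨Nat.pair k (Encodable.encode p), (hspec _ _ _).2 ?_⟩
    simp only [Nat.unpair_pair, true_and]
    refine ⟨?_, Encodable.encode s, by rw [← hk]; exact hm, Encodable.encodek s⟩
    rw [Option.eq_none_iff_forall_not_mem]
    intro y hy
    have hy2 := Nat.Partrec.Code.evaln_mono (Nat.le_succ k) hy
    rw [← Nat.succ_eq_add_one] at hk
    rw [hk] at hm
    have := Option.mem_unique hy2 hm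
    subst this
    exact Nat.find_min hex (by omega) hy
  · intro i j p s t hi hj
    obtain ⟨h1, h2, y, h3, h4⟩ := (hspec i p s).1 hi
    obtain ⟨h1', h2', y', h3', h4'⟩ := (hspec j p t).1 hj
    rw [← h1] at h2 h3
    rw [← h1'] at h2' h3'
    have key : ∀ a b z, st a (Encodable.encode p) = none → st (b+1) (Encodable.encode p) = some z →
        a ≤ b := by
      intro a b z ha hb
      by_contra hlt
      have := Nat.Partrec.Code.evaln_mono (show b + 1 ≤ a by omega) hb
      have ha' : Nat.Partrec.Code.evaln a c (Encodable.encode p) = none := ha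
      rw [ha'] at this; simp at this
    have hk : i.unpair.1 = j.unpair.1 := le_antisymm (key _ _ _ h2 h3') (key _ _ _ h2' h3)
    rw [← Nat.pair_unpair i, ← Nat.pair_unpair j, hk, ← h1, ← h1']

theorem H_le {U : Computer} {p s : List Bool} (h : s ∈ U.f p) : H U s ≤ p.length :=
  Nat.sInf_le ⟨p, rfl, h⟩

theorem H_simulate {U : Computer} (hU : IsOptimal U) (C : Computer) :
    ∃ d, ∀ p s, s ∈ C.f p → H U s ≤ p.length + d ∧ ∃ p', s ∈ U.f p' := by
  obtain ⟨d, hd⟩ := hU C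
  refine ⟨d, fun p s hs => ?_⟩
  obtain ⟨p', h1, h2⟩ := hd p (Part.dom_iff_mem.2 ⟨s, hs⟩)
  exact ⟨(H_le (h2 s hs)).trans h1, p', h2 s hs⟩

/-- Search followed by a computable output. -/
def srch {α : Type*} (P : α → ℕ → Bool) (G : α → ℕ → List Bool) : α →. List Bool :=
  fun a => (Nat.rfind (P a : ℕ →. Bool)).bind fun k => Part.some (G a k)

theorem srch_partrec {α : Type*} [Primcodable α] {P : α → ℕ → Bool} {G : α → ℕ → List Bool}
    (hP : Computable (fun p : α × ℕ => P p.1 p.2)) (hG : Computable (fun p : α × ℕ => G p.1 p.2)) :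
    Partrec (srch P G) := by
  have h1 : Partrec fun a => Nat.rfind (P a : ℕ →. Bool) :=
    Partrec.rfind (p := fun a => (P a : ℕ →. Bool)) (Computable.partrec hP)
  exact h1.bind (g := fun a k => Part.some (G a k)) (Computable.partrec hG)

theorem srch_mem {α : Type*} {P : α → ℕ → Bool} {G : α → ℕ → List Bool} {a : α}
    (h : ∃ k, P a k = true) : ∃ k, P a k = true ∧ G a k ∈ srch P G a := by
  obtain ⟨m, hm⟩ := h
  obtain ⟨k, hk, _⟩ := Nat.rfind_min' hm
  refine ⟨k, ?_, Part.mem_bind hk (Part.mem_some _)⟩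
  have := Nat.rfind_spec hk
  exact (Part.mem_some_iff.1 this).symm

theorem H_map {U : Computer} (hU : IsOptimal U) {ξ : List Bool →. List Bool} (hξ : Partrec ξ) :
    ∃ d, ∀ p s v, s ∈ U.f p → v ∈ ξ s → H U v ≤ p.length + d := by
  obtain ⟨d, hd⟩ := H_simulate hU
    { f := fun p => (U.f p).bind ξ
      partrec := U.partrec.bind (g := fun _ => ξ) (hξ.comp Computable.snd)
      prefixFree := fun p hp q hq => U.prefixFree p (Part.dom_iff_mem.2 (by
          obtain ⟨v, hv⟩ := Part.dom_iff_mem.1 hp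
          obtain ⟨s, hs, _⟩ := Part.mem_bind_iff.1 hv
          exact ⟨s, hs⟩)) q (Part.dom_iff_mem.2 (by
          obtain ⟨v, hv⟩ := Part.dom_iff_mem.1 hq
          obtain ⟨s, hs, _⟩ := Part.mem_bind_iff.1 hv
          exact ⟨s, hs⟩)) }
  exact ⟨d, fun p s v hs hv => (hd p v (Part.mem_bind hs hv)).1⟩

theorem coding {U : Computer} (hU : IsOptimal U) (b s : ℕ) {F : ℕ × List Bool →. List Bool}
    (hF : Partrec F) : ∃ d, ∀ m w v, w.length = b * m + s → v ∈ F (m, w) →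
      H U v ≤ m + 1 + (b * m + s) + d ∧ ∃ p, v ∈ U.f p := by
  let ix : List Bool → ℕ := List.findIdx (fun x => !x)
  have hix : Computable ix :=
    (Primrec.list_findIdx (f := fun l : List Bool => l) (p := fun _ x => !x) Primrec.id
      (Primrec.not.comp Primrec.snd)).to_comp
  let cd : List Bool → Bool := fun x => decide (x.length = ix x + 1 + (b * ix x + s))
  have hcd : Computable cd := by fun_prop
  let fn : List Bool →. List Bool := fun x => bif cd x then F (ix x, x.drop (ix x + 1)) else Part.none
  have hfn : Partrec fn := by
    refine Partrec.cond hcd (hF.comp (hix.pair ?_)) Partrec.none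
    exact Primrec.list_drop.to_comp.comp (cpt_add hix (Computable.const 1)) Computable.id
  have hdom : ∀ x, (fn x).Dom → x.length = ix x + 1 + (b * ix x + s) := by
    intro x hx
    by_contra hc
    have h0 : cd x = false := decide_eq_false hc
    simp only [fn, h0, cond_false] at hx
    exact hx
  obtain ⟨d, hd⟩ := H_simulate hU
    { f := fn
      partrec := hfn
      prefixFree := by
        intro p hp q hq hpq
        have h1 := hdom p hp
        have h2 := hdom q hq
        obtain ⟨t, rfl⟩ := hpq
        have h3 : ix (p ++ t) = ix p := by
          simp only [ix]; rw [List.findIdx_append, if_pos]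
          show ix p < p.length
          omega
        rw [h3, ← h1, List.length_append] at h2
        have : t = [] := List.length_eq_zero_iff.1 (by omega)
        simp [this] }
  refine ⟨d, fun m w v hw hv => ?_⟩
  let x := List.replicate m true ++ false :: w
  have hx : ix x = m := by
    simp only [ix, x]; rw [List.findIdx_append, if_neg]
    · simp [List.findIdx_cons]
    · rw [List.findIdx_lt_length]
      rintro ⟨y, hy, hy2⟩
      rw [List.eq_of_mem_replicate hy] at hy2
      simp at hy2
  have hlen : x.length = m + 1 + (b * m + s) := by simp [x, hw]; omega
  have hdr : x.drop (m+1) = w := by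
    have : x = (List.replicate m true ++ [false]) ++ w := by simp [x]
    rw [this, List.drop_left' (by simp)]
  have := hd x v (by
    have h0 : cd x = true := by simp only [cd, hx, hlen, decide_true]
    show v ∈ fn x
    simp only [fn, h0, cond_true, hx, hdr]; exact hv)
  rwa [hlen] at this

theorem H_prog {U : Computer} (hU : IsOptimal U) (v : List Bool) :
    ∃ p, p.length = H U v ∧ v ∈ U.f p := by
  obtain ⟨d, hd⟩ := coding hU 1 0 (F := fun x => Part.some x.2) Computable.snd.partrec
  obtain ⟨p, hp⟩ := (hd v.length v v (by simp) (Part.mem_some _)).2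
  exact Nat.sInf_mem (s := {n | ∃ p : List Bool, p.length = n ∧ v ∈ U.f p}) ⟨_, p, rfl, hp⟩


/-- Data of an enumeration of the domain: indicator, program length, output length. -/
structure EnumData (U : Computer) (o l r : ℕ → ℕ) : Prop where
  co : Computable o
  cl : Computable l
  cr : Computable r
  o01 : ∀ i, o i = 0 ∨ o i = 1
  l1 : ∀ i, o i = 1 → 1 ≤ l i
  kraft : ∀ k, ∑ i ∈ Finset.range k, (o i : ℝ) * (1/2 : ℝ) ^ (l i) ≤ 1
  summ : ∀ g : ℕ → ℝ, Summable (fun p : U.domain => g (p : List Bool).length) ↔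
    Summable (fun i => (o i : ℝ) * g (l i))
  tsum : ∀ g : ℕ → ℝ, ∑' p : U.domain, g (p : List Bool).length = ∑' i, (o i : ℝ) * g (l i)
  prog : ∀ p v, v ∈ U.f p → ∃ i, o i = 1 ∧ l i = p.length ∧ r i = v.length

theorem nil_not_mem {U : Computer} (hU : IsOptimal U) : ¬ (U.f []).Dom := by
  intro h
  have h1 : ∀ v, v ∈ U.f [] := by
    intro v
    obtain ⟨p, _, hp⟩ := H_prog hU v
    have := U.prefixFree [] h p (Part.dom_iff_mem.2 ⟨v, hp⟩) List.nil_prefix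
    rwa [← this] at hp
  have := Part.mem_unique (h1 [true]) (h1 [false])
  simp at this

theorem uniq_dec {S : Set (List Bool)} (hS : PrefixFree S) (hn : [] ∉ S) :
    InformationTheory.UniquelyDecodable S := by
  intro L₁
  induction L₁ with
  | nil =>
    intro L₂ _ h2 h
    cases L₂ with
    | nil => rfl
    | cons a L =>
      simp only [List.flatten_nil, List.flatten_cons] at h
      have : a = [] := (List.append_eq_nil_iff.1 h.symm).1
      exact absurd (this ▸ h2 a (by simp)) hn
  | cons b L ih =>
    intro L₂ h1 h2 h
    cases L₂ with
    | nil =>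
      simp only [List.flatten_nil, List.flatten_cons] at h
      have : b = [] := (List.append_eq_nil_iff.1 h).1
      exact absurd (this ▸ h1 b (by simp)) hn
    | cons a L' =>
      simp only [List.flatten_cons] at h
      have hab : b = a := by
        rcases List.prefix_or_prefix_of_prefix (l₃ := b ++ L.flatten) (List.prefix_append b _)
          (h ▸ List.prefix_append a _) with hp | hp
        · exact hS b (h1 b (by simp)) a (h2 a (by simp)) hp
        · exact (hS a (h2 a (by simp)) b (h1 b (by simp)) hp).symm
      subst hab
      rw [List.append_cancel_left_eq] at h
      rw [ih L' (fun w hw => h1 w (by simp [hw])) (fun w hw => h2 w (by simp [hw])) h]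

theorem exists_enumData {U : Computer} (hU : IsOptimal U) : ∃ o l r, EnumData U o l r := by
  classical
  obtain ⟨e, he, he1, he2, he3⟩ := exists_enum U
  let o : ℕ → ℕ := fun i => bif (e i).isSome then 1 else 0
  let l : ℕ → ℕ := fun i => ((e i).map (fun x => x.1.length)).getD 0
  let r : ℕ → ℕ := fun i => ((e i).map (fun x => x.2.length)).getD 0
  have hsome : ∀ i p s, e i = some (p, s) → o i = 1 ∧ l i = p.length ∧ r i = s.length := by
    intro i p s h; simp [o, l, r, h]
  have hnone : ∀ i, e i = none → o i = 0 := by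
    intro i h; simp [o, h]
  have hdec : ∀ i, e i = none ∨ ∃ p s, e i = some (p, s) := by
    intro i
    rcases h : e i with _ | ⟨p, s⟩
    · left; trivial
    · right; exact ⟨p, s, rfl⟩
  -- the index map
  have hk : ∀ p : U.domain, ∃ i s, e i = some ((p : List Bool), s) := by
    intro p
    obtain ⟨s, hs⟩ := Part.dom_iff_mem.1 p.2
    obtain ⟨i, hi⟩ := he2 _ _ hs
    exact ⟨i, s, hi⟩
  choose κ σ hκ using hk
  have hinj : Function.Injective κ := by
    intro p q h
    have h1 := hκ p
    rw [h, hκ q] at h1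
    have := Option.some.inj h1
    exact Subtype.ext (congrArg Prod.fst this).symm
  have hrange : ∀ i, i ∉ Set.range κ → o i = 0 := by
    intro i hi
    rcases hdec i with h | ⟨p, s, h⟩
    · exact hnone i h
    · exfalso
      have hs := he1 i p s h
      let p' : U.domain := ⟨p, Part.dom_iff_mem.2 ⟨s, hs⟩⟩
      exact hi ⟨p', he3 _ _ _ _ _ (hκ p') h⟩
  have hcomp : ∀ (g : ℕ → ℝ), (fun i => (o i : ℝ) * g (l i)) ∘ κ =
      fun p : U.domain => g (p : List Bool).length := by
    intro g; funext p
    obtain ⟨h1, h2, _⟩ := hsome _ _ _ (hκ p)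
    simp [h1, h2]
  refine ⟨o, l, r, ?_, ?_, ?_, ?_, ?_, ?_, ?_, ?_, ?_⟩
  · exact Computable.cond (Primrec.option_isSome.to_comp.comp he) (Computable.const 1)
      (Computable.const 0)
  · exact Computable.option_getD (Computable.option_map he (g := fun _ x => x.1.length)
      (by unfold Computable₂; fun_prop)) (Computable.const 0)
  · exact Computable.option_getD (Computable.option_map he (g := fun _ x => x.2.length)
      (by unfold Computable₂; fun_prop)) (Computable.const 0)
  · intro i
    rcases hdec i with h | ⟨p, s, h⟩
    · exact Or.inl (hnone i h)
    · exact Or.inr (hsome i p s h).1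
  · intro i hi
    rcases hdec i with h | ⟨p, s, h⟩
    · rw [hnone i h] at hi; simp at hi
    · rw [(hsome i p s h).2.1]
      have hs := he1 i p s h
      rcases p with _ | ⟨a, p⟩
      · exact absurd (Part.dom_iff_mem.2 ⟨s, hs⟩) (nil_not_mem hU)
      · simp
  · intro k
    let S : Finset (List Bool) := ((Finset.range k).filter (fun i => o i = 1)).image
      (fun i => ((e i).map Prod.fst).getD [])
    have hS : ∀ w ∈ (S : Set (List Bool)), w ∈ {p | (U.f p).Dom} := by
      intro w hw
      simp only [S, Finset.coe_image, Set.mem_image, Finset.mem_coe, Finset.mem_filter] at hw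
      obtain ⟨i, ⟨_, hi⟩, rfl⟩ := hw
      rcases hdec i with h | ⟨p, s, h⟩
      · rw [hnone i h] at hi; simp at hi
      · simp only [h, Option.map_some, Option.getD_some]
        exact Part.dom_iff_mem.2 ⟨s, he1 i p s h⟩
    have hpf : PrefixFree (S : Set (List Bool)) :=
      fun p hp q hq => U.prefixFree p (hS p hp) q (hS q hq)
    have hK := InformationTheory.kraft_mcmillan_inequality
      (uniq_dec hpf (fun h => nil_not_mem hU (hS _ h)))
    rw [Finset.sum_image] at hK
    · rw [Finset.sum_filter] at hK
      refine le_trans (le_of_eq ?_) hK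
      refine Finset.sum_congr rfl fun i _ => ?_
      rcases hdec i with h | ⟨p, s, h⟩
      · simp [hnone i h]
      · obtain ⟨h1, h2, _⟩ := hsome i p s h
        simp [h1, h2, h]
    · intro i hi j hj hij
      simp only [Finset.coe_filter, Set.mem_setOf_eq] at hi hj
      rcases hdec i with h | ⟨p, s, h⟩
      · rw [hnone i h] at hi; simp at hi
      rcases hdec j with h' | ⟨p', s', h'⟩
      · rw [hnone j h'] at hj; simp at hj
      simp only [h, h', Option.map_some, Option.getD_some] at hij
      subst hij
      exact he3 _ _ _ _ _ h h'
  · intro g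
    rw [← hcomp g]
    exact hinj.summable_iff fun i hi => by simp [hrange i hi]
  · intro g
    rw [← hinj.tsum_eq (f := fun i => (o i : ℝ) * g (l i))]
    · exact tsum_congr fun p => (congrFun (hcomp g) p).symm
    · intro i hi
      by_contra hc
      exact hi (by simp [hrange i hc])
  · intro p v hv
    obtain ⟨i, hi⟩ := he2 p v hv
    exact ⟨i, hsome i p v hi⟩


theorem var_identity (Z W1 W2 w l : ℝ) (hZ : 0 < Z) (hw : 0 ≤ w) :
    (W2 + l^2 * w)/(Z+w) - ((W1 + l*w)/(Z+w))^2 - (W2/Z - (W1/Z)^2) =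
    w/(Z+w) * (Z/(Z+w) * (l - W1/Z)^2 - (W2/Z - (W1/Z)^2)) := by
  have : Z + w ≠ 0 := by positivity
  field_simp
  ring

theorem var_incr (z0 Zm M1 M2 : ℝ) (hz0 : 0 < z0) (hM1 : 0 ≤ M1) (hM2 : 0 ≤ M2) :
    ∃ (L : ℕ) (c c' : ℝ), 0 < c ∧ 0 < c' ∧ ∀ Z W1 W2 w : ℝ, ∀ l : ℕ, z0 ≤ Z → 0 ≤ w → Z + w ≤ Zm →
      0 ≤ W1 → W1 ≤ M1 → 0 ≤ W2 → W2 ≤ M2 → L ≤ l →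
      c * ((l:ℝ)^2 * w) ≤ (W2 + (l:ℝ)^2 * w)/(Z+w) - ((W1 + l*w)/(Z+w))^2 - (W2/Z - (W1/Z)^2) ∧
      (W2 + (l:ℝ)^2 * w)/(Z+w) - ((W1 + l*w)/(Z+w))^2 - (W2/Z - (W1/Z)^2) ≤ c' * ((l:ℝ)^2 * w) := by
  by_cases hzm : z0 ≤ Zm
  swap
  · exact ⟨0, 1, 1, one_pos, one_pos, fun Z W1 W2 w l h1 h2 h3 => absurd (by linarith) hzm⟩
  have hZm : 0 < Zm := by linarith
  set ρ := z0 / Zm with hρ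
  have hρ0 : 0 < ρ := by positivity
  set B1 := M1 / z0 with hB1
  set B2 := M2 / z0 with hB2
  have hB10 : 0 ≤ B1 := by positivity
  have hB20 : 0 ≤ B2 := by positivity
  obtain ⟨L, hL⟩ := exists_nat_ge (1 + 2 * B1 + 8 * B2 / ρ)
  refine ⟨L, ρ / 8 / Zm, (1 + 2 * B1^2) / z0, by positivity, by positivity, ?_⟩
  intro Z W1 W2 w l hZ hw hZw hW1 hW1' hW2 hW2' hl
  have hZ0 : 0 < Z := by linarith
  have hZw0 : 0 < Z + w := by linarith
  rw [var_identity Z W1 W2 w l hZ0 hw]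
  set E := W1 / Z with hE
  have hE0 : 0 ≤ E := by positivity
  have hEB : E ≤ B1 := div_le_div₀ hM1 hW1' hz0 hZ
  have hV0 : 0 ≤ W2 / Z := by positivity
  have hVB : W2 / Z ≤ B2 := div_le_div₀ hM2 hW2' hz0 hZ
  have hl' : (1 + 2 * B1 + 8 * B2 / ρ) ≤ (l : ℝ) := hL.trans (by exact_mod_cast hl)
  have hq : 0 ≤ 8 * B2 / ρ := by positivity
  have hl1 : 1 ≤ (l:ℝ) := by linarith
  have hrat : ρ ≤ Z / (Z + w) := div_le_div₀ hZ0.le hZ hZw0 hZw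
  have hrat1 : Z / (Z + w) ≤ 1 := by rw [div_le_one hZw0]; linarith
  have hw1 : w / Zm ≤ w / (Z+w) := div_le_div_of_nonneg_left hw hZw0 hZw
  have hw2 : w / (Z+w) ≤ w / z0 := div_le_div_of_nonneg_left hw hz0 (by linarith)
  have hwz : 0 ≤ w / (Z+w) := by positivity
  constructor
  · clear_value ρ B1 B2 E
    have b1 : ρ / 8 * (l:ℝ)^2 ≤ Z/(Z+w) * ((l:ℝ) - E)^2 - (W2/Z - E^2) := by
      have h1 : (l:ℝ)^2/4 ≤ ((l:ℝ) - E)^2 := by nlinarith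
      have h2 : ρ * ((l:ℝ)^2/4) ≤ Z/(Z+w) * ((l:ℝ) - E)^2 :=
        mul_le_mul hrat h1 (by positivity) (by linarith)
      have h3 : B2 ≤ ρ / 8 * (l:ℝ)^2 := by
        have h4 : 8 * B2 / ρ ≤ (l:ℝ)^2 := by nlinarith
        rw [div_le_iff₀ hρ0] at h4
        linarith
      nlinarith [sq_nonneg E]
    calc ρ / 8 / Zm * ((l:ℝ)^2 * w) = w / Zm * (ρ / 8 * (l:ℝ)^2) := by ring
      _ ≤ w / (Z+w) * (ρ / 8 * (l:ℝ)^2) := by gcongr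
      _ ≤ _ := by gcongr
  · clear_value ρ B1 B2 E
    have b1 : Z/(Z+w) * ((l:ℝ) - E)^2 - (W2/Z - E^2) ≤ (1 + 2 * B1^2) * (l:ℝ)^2 := by
      have h1 : ((l:ℝ) - E)^2 ≤ (l:ℝ)^2 + B1^2 := by nlinarith
      have h2 : Z/(Z+w) * ((l:ℝ) - E)^2 ≤ 1 * ((l:ℝ)^2 + B1^2) :=
        mul_le_mul hrat1 h1 (by positivity) (by norm_num)
      have h3 : E^2 ≤ B1^2 := by gcongr
      have h4 : B1^2 * 1 ≤ B1^2 * (l:ℝ)^2 := by gcongr; nlinarith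
      linarith
    calc _ ≤ w / (Z+w) * ((1 + 2 * B1^2) * (l:ℝ)^2) := by gcongr
      _ ≤ w / z0 * ((1 + 2 * B1^2) * (l:ℝ)^2) := by gcongr
      _ = _ := by ring

/-- Partial sums of the weights. -/
def psum (o l : ℕ → ℕ) (j : ℕ) (q : ℝ) (k : ℕ) : ℝ :=
  ∑ i ∈ Finset.range k, (o i : ℝ) * ((l i : ℝ)^j * q ^ (l i))

/-- Full sums of the weights. -/
noncomputable def fsum (o l : ℕ → ℕ) (j : ℕ) (q : ℝ) : ℝ :=
  ∑' i, (o i : ℝ) * ((l i : ℝ)^j * q ^ (l i))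

theorem pow_bound (j : ℕ) (q : ℝ) (hq0 : 0 ≤ q) (hq : q < 1/2) :
    ∃ K : ℝ, 0 < K ∧ ∀ l : ℕ, (l:ℝ)^j * q^l ≤ K * (1/2)^l := by
  have h := tendsto_pow_const_mul_const_pow_of_abs_lt_one j (r := 2 * q)
    (by rw [abs_of_nonneg (by linarith)]; linarith)
  obtain ⟨K, hK⟩ := h.bddAbove_range
  refine ⟨max K 1, by positivity, fun l => ?_⟩
  have h1 : (l:ℝ)^j * (2*q)^l ≤ K := hK ⟨l, rfl⟩
  have h2 : (l:ℝ)^j * q^l = ((l:ℝ)^j * (2*q)^l) * (1/2)^l := by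
    rw [mul_assoc, ← mul_pow]; congr 2; ring
  rw [h2]
  gcongr
  exact h1.trans (le_max_left _ _)


theorem summ_half {U : Computer} {o l r : ℕ → ℕ} (D : EnumData U o l r) : Summable (fun i => (o i : ℝ) * (1/2 : ℝ)^(l i)) :=
  summable_of_sum_range_le (c := 1) (fun i => by positivity) D.kraft

theorem summ_w {U : Computer} {o l r : ℕ → ℕ} (D : EnumData U o l r) (j : ℕ) {q : ℝ} (hq0 : 0 ≤ q) (hq : q < 1/2) :
    Summable (fun i => (o i : ℝ) * ((l i : ℝ)^j * q ^ (l i))) := by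
  obtain ⟨K, hK, h⟩ := pow_bound j q hq0 hq
  refine Summable.of_nonneg_of_le (fun i => by positivity) (fun i => ?_) ((summ_half D).mul_left K)
  have := mul_le_mul_of_nonneg_left (h (l i)) (show (0:ℝ) ≤ o i by positivity)
  linarith

theorem psum_le_fsum {U : Computer} {o l r : ℕ → ℕ} (D : EnumData U o l r) (j : ℕ) {q : ℝ} (hq0 : 0 ≤ q) (hq : q < 1/2) (k : ℕ) :
    psum o l j q k ≤ fsum o l j q :=
  (summ_w D j hq0 hq).sum_le_tsum _ (fun i _ => by positivity)

theorem psum_tendsto {U : Computer} {o l r : ℕ → ℕ} (D : EnumData U o l r) (j : ℕ) {q : ℝ} (hq0 : 0 ≤ q) (hq : q < 1/2) :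
    Tendsto (psum o l j q) atTop (nhds (fsum o l j q)) :=
  (summ_w D j hq0 hq).hasSum.tendsto_sum_nat

theorem psum_mono {o l : ℕ → ℕ} (j : ℕ) {q : ℝ} (hq0 : 0 ≤ q) : Monotone (psum o l j q) :=
  monotone_nat_of_le_succ fun k => by
    unfold psum; rw [Finset.sum_range_succ]
    have : 0 ≤ (o k : ℝ) * ((l k : ℝ)^j * q ^ (l k)) := by positivity
    linarith

theorem psum_nonneg {o l : ℕ → ℕ} (j : ℕ) {q : ℝ} (hq0 : 0 ≤ q) (k : ℕ) : 0 ≤ psum o l j q k :=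
  Finset.sum_nonneg fun i _ => by positivity

theorem long_of_large {U : Computer} {o l r : ℕ → ℕ} (D : EnumData U o l r) (L : ℕ) : ∃ k0, ∀ i ≥ k0, o i = 1 → L ≤ l i := by
  have h := (summ_half D).tendsto_atTop_zero
  obtain ⟨k0, hk⟩ := eventually_atTop.1 (h.eventually (gt_mem_nhds (show (0:ℝ) < (1/2)^L by positivity)))
  refine ⟨k0, fun i hi ho => ?_⟩
  have := hk i hi
  simp only [ho, Nat.cast_one, one_mul] at this
  exact ((pow_lt_pow_iff_right_of_lt_one₀ (by norm_num) (by norm_num)).1 this).le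

/-- partial variance -/
noncomputable def pvar (o l : ℕ → ℕ) (q : ℝ) (k : ℕ) : ℝ :=
  psum o l 2 q k / psum o l 0 q k - (psum o l 1 q k / psum o l 0 q k)^2
/-- variance -/
noncomputable def fvar (o l : ℕ → ℕ) (q : ℝ) : ℝ :=
  fsum o l 2 q / fsum o l 0 q - (fsum o l 1 q / fsum o l 0 q)^2

theorem exists_pos {o l : ℕ → ℕ} (h : ∃ i, o i = 1) {q : ℝ} (hq0 : 0 < q) : ∃ k1 : ℕ, 0 < psum o l 0 q k1 := by
  obtain ⟨i, hi⟩ := h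
  refine ⟨i+1, ?_⟩
  unfold psum; rw [Finset.sum_range_succ]
  have h1 : 0 < (o i : ℝ) * ((l i : ℝ)^0 * q ^ (l i)) := by rw [hi]; simp; positivity
  have h2 := psum_nonneg (o := o) (l := l) 0 hq0.le i
  unfold psum at h2; linarith

theorem pvar_props {U : Computer} {o l r : ℕ → ℕ} (D : EnumData U o l r) (h : ∃ i, o i = 1) {q : ℝ} (hq0 : 0 < q) (hq : q < 1/2) :
    0 < fsum o l 0 q ∧ Tendsto (pvar o l q) atTop (nhds (fvar o l q)) ∧
    ∃ (k0 : ℕ) (c c' : ℝ), 0 < c ∧ 0 < c' ∧ (∀ k ≥ k0, 0 < psum o l 0 q k) ∧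
      (∀ k ≥ k0, pvar o l q k ≤ fvar o l q) ∧
      (∀ k ≥ k0, ∀ j ≥ k, o j = 1 → c * ((l j:ℝ)^2 * q^(l j)) ≤ fvar o l q - pvar o l q k) ∧
      (∀ k ≥ k0, ∀ B, (∀ K ≥ k, ∑ i ∈ Finset.Ico k K, (o i : ℝ) * ((l i : ℝ)^2 * q ^ (l i)) ≤ B) →
        fvar o l q - pvar o l q k ≤ c' * B) := by
  obtain ⟨k1, hk1⟩ := exists_pos (l := l) h hq0
  have hF : 0 < fsum o l 0 q := hk1.trans_le (psum_le_fsum D 0 hq0.le hq k1)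
  have hT : Tendsto (pvar o l q) atTop (nhds (fvar o l q)) := by
    have t := fun j => psum_tendsto D j hq0.le hq
    exact ((t 2).div (t 0) hF.ne').sub (((t 1).div (t 0) hF.ne').pow 2)
  have hnn : ∀ j, 0 ≤ fsum o l j q := fun j => tsum_nonneg fun i => by positivity
  refine ⟨hF, hT, ?_⟩
  obtain ⟨L, c, c', hc, hc', hi⟩ := var_incr (psum o l 0 q k1) (fsum o l 0 q) (fsum o l 1 q)
    (fsum o l 2 q) hk1 (hnn 1) (hnn 2)
  obtain ⟨k2, hk2⟩ := long_of_large D L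
  have hstep : ∀ k ≥ max k1 k2, c * ((o k : ℝ) * ((l k : ℝ)^2 * q^(l k))) ≤
      pvar o l q (k+1) - pvar o l q k ∧ pvar o l q (k+1) - pvar o l q k ≤
      c' * ((o k : ℝ) * ((l k : ℝ)^2 * q^(l k))) := by
    intro k hk
    have hs : ∀ j, psum o l j q (k+1) = psum o l j q k + (o k : ℝ) * ((l k : ℝ)^j * q ^ (l k)) :=
      fun j => Finset.sum_range_succ _ _
    rcases D.o01 k with ho | ho
    · have : pvar o l q (k+1) = pvar o l q k := by unfold pvar; simp [hs, ho]
      rw [this, ho]; simp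
    · have hs0 : psum o l 0 q (k+1) = psum o l 0 q k + q ^ (l k) := by rw [hs, ho]; simp
      have hs1 : psum o l 1 q (k+1) = psum o l 1 q k + l k * q ^ (l k) := by rw [hs, ho]; simp
      have hs2 : psum o l 2 q (k+1) = psum o l 2 q k + (l k : ℝ)^2 * q ^ (l k) := by
        rw [hs, ho]; simp
      have := hi (psum o l 0 q k) (psum o l 1 q k) (psum o l 2 q k) (q^(l k)) (l k)
        (psum_mono 0 hq0.le (le_trans (le_max_left _ _) hk)) (by positivity)
        (by rw [← hs0]; exact psum_le_fsum D 0 hq0.le hq _) (psum_nonneg 1 hq0.le k)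
        (psum_le_fsum D 1 hq0.le hq k) (psum_nonneg 2 hq0.le k)
        (psum_le_fsum D 2 hq0.le hq k) (hk2 k (le_trans (le_max_right _ _) hk) ho)
      unfold pvar
      rw [hs0, hs1, hs2, ho]
      simpa using this
  have hmono : ∀ k ≥ max k1 k2, ∀ K ≥ k, pvar o l q k ≤ pvar o l q K := by
    intro k hk K hK
    induction K, hK using Nat.le_induction with
    | base => exact le_rfl
    | succ K hK ih =>
      have := (hstep K (le_trans hk hK)).1
      have h0 : 0 ≤ c * ((o K : ℝ) * ((l K : ℝ)^2 * q^(l K))) := by positivity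
      linarith
  have hle : ∀ k ≥ max k1 k2, pvar o l q k ≤ fvar o l q := fun k hk =>
    ge_of_tendsto hT (eventually_atTop.2 ⟨k, fun K hK => hmono k hk K hK⟩)
  refine ⟨max k1 k2, c, c', hc, hc', ?_, hle, ?_, ?_⟩
  · intro k hk
    exact hk1.trans_le (psum_mono 0 hq0.le (le_trans (le_max_left _ _) hk))
  · intro k hk j hj ho
    have h1 := (hstep j (le_trans hk hj)).1
    have h2 := hle (j+1) (by omega)
    have h3 := hmono k hk j hj
    rw [ho] at h1
    simp only [Nat.cast_one, one_mul] at h1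
    linarith
  · intro k hk B hB
    have hsum : ∀ K ≥ k, pvar o l q K - pvar o l q k ≤
        c' * ∑ i ∈ Finset.Ico k K, (o i : ℝ) * ((l i : ℝ)^2 * q ^ (l i)) := by
      intro K hK
      induction K, hK using Nat.le_induction with
      | base => simp
      | succ K hK ih =>
        rw [Finset.sum_Ico_succ_top hK, mul_add]
        have := (hstep K (le_trans hk hK)).2
        linarith
    refine le_of_tendsto (hT.sub_const (pvar o l q k)) (eventually_atTop.2 ⟨k, fun K hK => ?_⟩)
    exact (hsum K hK).trans (mul_le_mul_of_nonneg_left (hB K hK) hc'.le)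


/-- Rational partial sums. -/
def qpsum (o l : ℕ → ℕ) (j : ℕ) (q : ℚ) (k : ℕ) : ℚ :=
  ∑ i ∈ Finset.range k, (o i : ℚ) * ((l i : ℚ)^j * q ^ (l i))

theorem qpsum_cast (o l : ℕ → ℕ) (j : ℕ) (q : ℚ) (k : ℕ) :
    ((qpsum o l j q k : ℚ) : ℝ) = psum o l j q k := by
  unfold qpsum psum; push_cast; rfl

theorem cpt_qpsum {α : Type*} [Primcodable α] {o l : ℕ → ℕ} (ho : Computable o) (hl : Computable l)
    (j : ℕ) {q : α → ℚ} {k : α → ℕ} (hq : Computable q) (hk : Computable k) :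
    Computable (fun a => qpsum o l j (q a) (k a)) := by
  unfold qpsum
  refine cpt_qsum (f := fun a i => (o i : ℚ) * ((l i : ℚ)^j * q a ^ (l i))) ?_ hk
  fun_prop

theorem psum_mono_q {o l : ℕ → ℕ} (j : ℕ) {q q' : ℝ} (hq0 : 0 ≤ q) (h : q ≤ q') (k : ℕ) :
    psum o l j q k ≤ psum o l j q' k := by
  unfold psum; gcongr

theorem psum_pos_of {o l : ℕ → ℕ} {q q' : ℝ} (hq0 : 0 < q) {k : ℕ}
    (h : 0 < psum o l 0 q' k) : 0 < psum o l 0 q k := by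
  rcases (psum_nonneg (o := o) (l := l) 0 hq0.le k).lt_or_eq with h1 | h1
  · exact h1
  exfalso
  unfold psum at h h1
  have h2 := (Finset.sum_eq_zero_iff_of_nonneg (fun i _ => by positivity)).1 h1.symm
  have : ∑ i ∈ Finset.range k, (o i : ℝ) * ((l i : ℝ)^0 * q' ^ (l i)) = 0 := by
    refine Finset.sum_eq_zero fun i hi => ?_
    have := h2 i hi
    rcases mul_eq_zero.1 this with h3 | h3
    · rw [h3, zero_mul]
    · simp at h3; exact absurd h3.1 hq0.ne'
  linarith

theorem psum_tendsto_q {o l : ℕ → ℕ} (j : ℕ) {q : ℕ → ℝ} {b : ℝ} (h : Tendsto q atTop (nhds b)) (k : ℕ) :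
    Tendsto (fun n => psum o l j (q n) k) atTop (nhds (psum o l j b k)) := by
  unfold psum
  exact tendsto_finsetSum _ fun i _ => ((h.pow _).const_mul _).const_mul _

theorem exists_approx {U : Computer} {o l r : ℕ → ℕ} (D : EnumData U o l r) {β γ : ℝ}
    (hβ : CRp β) (hγ : CRp γ) (k0 : ℕ) (hk0 : ∀ k ≥ k0, 0 < psum o l 0 β k) :
    ∃ g : ℕ → ℚ, Computable g ∧ ∀ k, (g k : ℝ) ≤ γ * pvar o l β (k + k0) ∧
      γ * pvar o l β (k + k0) - g k ≤ (1/2)^k := by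
  have hβ0 := CRp_pos hβ
  have hγ0 := CRp_pos hγ
  obtain ⟨blo, bhi, c1, c2, h0, h1, h2, h3, h4⟩ := hβ
  obtain ⟨glo, ghi, c1', c2', h0', h1', h2', h3', h4'⟩ := hγ
  let lo : ℕ → ℕ → ℚ := fun k n => glo n * (qpsum o l 2 (blo n) (k+k0) / qpsum o l 0 (bhi n) (k+k0))
    - ghi n * (qpsum o l 1 (bhi n) (k+k0) / qpsum o l 0 (blo n) (k+k0))^2
  let hi : ℕ → ℕ → ℚ := fun k n => ghi n * (qpsum o l 2 (bhi n) (k+k0) / qpsum o l 0 (blo n) (k+k0))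
    - glo n * (qpsum o l 1 (blo n) (k+k0) / qpsum o l 0 (bhi n) (k+k0))^2
  have cs : ∀ j, ∀ b : ℕ → ℚ, Computable b →
      Computable (fun p : ℕ × ℕ => qpsum o l j (b p.2) (p.1 + k0)) := fun j b hb =>
    cpt_qpsum D.co D.cl j (by fun_prop) (by fun_prop)
  have clo : Computable (fun p : ℕ × ℕ => lo p.1 p.2) := by
    have a1 := cs 2 blo c1
    have a2 := cs 0 bhi c2
    have a3 := cs 1 bhi c2
    have a4 := cs 0 blo c1
    exact cpt_qsub (cpt_qmul (by fun_prop) (cpt_qdiv a1 a2))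
      (cpt_qmul (by fun_prop) (cpt_qpow (cpt_qdiv a3 a4) (Computable.const 2)))
  have chi : Computable (fun p : ℕ × ℕ => hi p.1 p.2) := by
    have a1 := cs 2 bhi c2
    have a2 := cs 0 blo c1
    have a3 := cs 1 blo c1
    have a4 := cs 0 bhi c2
    exact cpt_qsub (cpt_qmul (by fun_prop) (cpt_qdiv a1 a2))
      (cpt_qmul (by fun_prop) (cpt_qpow (cpt_qdiv a3 a4) (Computable.const 2)))
  have pos : ∀ n, (0:ℝ) < blo n := fun n => by exact_mod_cast h0 n
  have pos' : ∀ n, (0:ℝ) < glo n := fun n => by exact_mod_cast h0' n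
  have lole : ∀ k n, (lo k n : ℝ) ≤ γ * pvar o l β (k+k0) := by
    intro k n
    have hp := hk0 (k+k0) (by omega)
    have hz1 := psum_pos_of (pos n) hp
    have q1 := psum_mono_q (o := o) (l := l) 2 (pos n).le (h1 n) (k+k0)
    have q2 := psum_mono_q (o := o) (l := l) 0 hβ0.le (h2 n) (k+k0)
    have q3 := psum_mono_q (o := o) (l := l) 1 hβ0.le (h2 n) (k+k0)
    have q4 := psum_mono_q (o := o) (l := l) 0 (pos n).le (h1 n) (k+k0)
    have n2 := psum_nonneg (o := o) (l := l) 2 hβ0.le (k+k0)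
    have n1 := psum_nonneg (o := o) (l := l) 1 hβ0.le (k+k0)
    simp only [lo]; push_cast; simp only [qpsum_cast]
    unfold pvar; rw [mul_sub]
    apply sub_le_sub
    · exact mul_le_mul (h1' n) (div_le_div₀ n2 q1 hp q2)
        (div_nonneg (psum_nonneg _ (pos n).le _) (hp.trans_le q2).le) hγ0.le
    · exact mul_le_mul (h2' n) (pow_le_pow_left₀ (div_nonneg n1 hp.le)
        (div_le_div₀ (n1.trans q3) q3 hz1 q4) 2) (by positivity) (hγ0.le.trans (h2' n))
  have hile : ∀ k n, γ * pvar o l β (k+k0) ≤ (hi k n : ℝ) := by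
    intro k n
    have hp := hk0 (k+k0) (by omega)
    have hz1 := psum_pos_of (pos n) hp
    have q1 := psum_mono_q (o := o) (l := l) 2 hβ0.le (h2 n) (k+k0)
    have q2 := psum_mono_q (o := o) (l := l) 0 hβ0.le (h2 n) (k+k0)
    have q3 := psum_mono_q (o := o) (l := l) 1 (pos n).le (h1 n) (k+k0)
    have q4 := psum_mono_q (o := o) (l := l) 0 (pos n).le (h1 n) (k+k0)
    have n2 := psum_nonneg (o := o) (l := l) 2 hβ0.le (k+k0)
    have n1 := psum_nonneg (o := o) (l := l) 1 hβ0.le (k+k0)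
    have n1' := psum_nonneg (o := o) (l := l) 1 (pos n).le (k+k0)
    simp only [hi]; push_cast; simp only [qpsum_cast]
    unfold pvar; rw [mul_sub]
    apply sub_le_sub
    · exact mul_le_mul (h2' n) (div_le_div₀ (n2.trans q1) q1 hz1 q4)
        (div_nonneg n2 hp.le) (hγ0.le.trans (h2' n))
    · exact mul_le_mul (h1' n) (pow_le_pow_left₀ (div_nonneg n1' (hp.trans_le q2).le)
        (div_le_div₀ n1 q3 hp q2) 2) (by positivity) hγ0.le
  have tlo : ∀ k, Tendsto (fun n => (lo k n : ℝ)) atTop (nhds (γ * pvar o l β (k+k0))) := by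
    intro k
    have hp := (hk0 (k+k0) (by omega)).ne'
    have q1 := fun j => psum_tendsto_q (o := o) (l := l) j h3 (k+k0)
    have q2 := fun j => psum_tendsto_q (o := o) (l := l) j h4 (k+k0)
    unfold pvar; rw [mul_sub]
    refine ((h3'.mul ((q1 2).div (q2 0) hp)).sub (h4'.mul (((q2 1).div (q1 0) hp).pow 2))).congr
      fun n => ?_
    simp only [lo]; push_cast; simp only [qpsum_cast]; rfl
  have thi : ∀ k, Tendsto (fun n => (hi k n : ℝ)) atTop (nhds (γ * pvar o l β (k+k0))) := by
    intro k
    have hp := (hk0 (k+k0) (by omega)).ne'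
    have q1 := fun j => psum_tendsto_q (o := o) (l := l) j h3 (k+k0)
    have q2 := fun j => psum_tendsto_q (o := o) (l := l) j h4 (k+k0)
    unfold pvar; rw [mul_sub]
    refine ((h4'.mul ((q2 2).div (q1 0) hp)).sub (h3'.mul (((q1 1).div (q2 0) hp).pow 2))).congr
      fun n => ?_
    simp only [hi]; push_cast; simp only [qpsum_cast]; rfl
  obtain ⟨F, hF, hF2⟩ := cpt_find (P := fun k n => qle (hi k n - lo k n) ((1/2)^k)) (by fun_prop) (by
    intro k
    have ht := (thi k).sub (tlo k)
    rw [sub_self] at ht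
    obtain ⟨n, hn⟩ := (ht.eventually (gt_mem_nhds (show (0:ℝ) < (1/2)^k by positivity))).exists
    refine ⟨n, (qle_iff _ _).2 ?_⟩
    have : ((hi k n - lo k n : ℚ) : ℝ) ≤ (((1/2)^k : ℚ) : ℝ) := by push_cast; exact hn.le
    exact_mod_cast this)
  refine ⟨fun k => lo k (F k), by fun_prop, fun k => ⟨lole k _, ?_⟩⟩
  have h5 := (qle_iff _ _).1 (hF2 k).1
  have h6 : ((hi k (F k) - lo k (F k) : ℚ) : ℝ) ≤ (((1/2)^k : ℚ) : ℝ) := by exact_mod_cast h5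
  push_cast at h6
  have h7 := hile k (F k)
  simp only; linarith


/-- binary value of a string -/
def bval (s : List Bool) : ℕ := s.foldl (fun a b => 2 * a + bif b then 1 else 0) 0

@[fun_prop] theorem cpt_bval : Computable bval := by
  have : Primrec bval := by
    refine Primrec.list_foldl (h := fun _ (q : ℕ × Bool) => 2 * q.1 + bif q.2 then 1 else 0)
      Primrec.id (Primrec.const 0) ?_
    have h1 : Primrec (fun p : List Bool × ℕ × Bool => p.2.1) := Primrec.fst.comp Primrec.snd
    have h2 : Primrec (fun p : List Bool × ℕ × Bool => p.2.2) := Primrec.snd.comp Primrec.snd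
    exact Primrec.nat_add.comp (Primrec.nat_mul.comp (Primrec.const 2) h1)
      (Primrec.cond h2 (Primrec.const 1) (Primrec.const 0))
  exact this.to_comp

theorem bits_length (x : ℝ) (n : ℕ) : (bits x n).length = n := by simp [bits]

theorem bits_fract (x : ℝ) (n : ℕ) : bits (Int.fract x) n = bits x n := by
  simp [bits, binDigit, Int.fract_fract]

theorem floor_shift {x : ℝ} (a b : ℕ) :
    ⌊x * 2 ^ (a + b)⌋₊ / 2 ^ b = ⌊x * 2 ^ a⌋₊ := by
  have h := Nat.floor_div_natCast (x * 2^(a+b)) (2^b)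
  rw [← h]; congr 1; push_cast; rw [pow_add]; field_simp

theorem binDigit_eq {x : ℝ} (h0 : 0 ≤ x) (h1 : x < 1) (n : ℕ) :
    binDigit x n = decide (⌊x * 2^n⌋₊ % 2 = 1) := by
  unfold binDigit
  rw [Int.fract_eq_self.2 ⟨h0, h1⟩, ← Int.natCast_floor_eq_floor (by positivity)]
  congr 1
  apply propext
  omega

theorem bval_bits {x : ℝ} (h0 : 0 ≤ x) (h1 : x < 1) (n : ℕ) : bval (bits x n) = ⌊x * 2^n⌋₊ := by
  induction n with
  | zero =>
    simp [bits, bval]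
    exact (Nat.floor_eq_zero.2 h1).symm
  | succ n ih =>
    have : bits x (n+1) = bits x n ++ [binDigit x (n+1)] := by simp [bits, List.range_succ]
    have h3 := floor_shift (x := x) n 1
    have h2 : bval (bits x (n+1)) = 2 * bval (bits x n) + bif binDigit x (n+1) then 1 else 0 := by
      rw [this]; simp [bval]
    rw [h2, ih, binDigit_eq h0 h1]
    rw [pow_one] at h3
    by_cases hc : ⌊x * 2^(n+1)⌋₊ % 2 = 1
    · simp only [hc, decide_true, cond_true]; omega
    · simp only [hc, decide_false, cond_false]; omega

/-- the `n` low order bits of `v`. -/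
def tobits (n v : ℕ) : List Bool :=
  Nat.rec (motive := fun _ => List Bool) [] (fun i b => b ++ [decide ((v / 2^(n-1-i)) % 2 = 1)]) n

@[fun_prop] theorem cpt_concat {α : Type*} [Primcodable α] {f : α → List Bool} {g : α → Bool}
    (hf : Computable f) (hg : Computable g) : Computable (fun a => f a ++ [g a]) :=
  Primrec.list_concat.to_comp.comp hf hg

theorem cpt_tobits {α : Type*} [Primcodable α] {f g : α → ℕ} (hf : Computable f)
    (hg : Computable g) : Computable (fun a => tobits (f a) (g a)) := by
  unfold tobits
  exact cpt_rec (h := fun a i b => b ++ [decide ((g a / 2^(f a-1-i)) % 2 = 1)]) hf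
    (Computable.const []) (by fun_prop)

theorem bits_eq_tobits {x : ℝ} (h0 : 0 ≤ x) (h1 : x < 1) (n : ℕ) :
    bits x n = tobits n ⌊x * 2^n⌋₊ := by
  have : ∀ m ≤ n, bits x m = Nat.rec (motive := fun _ => List Bool) []
      (fun i b => b ++ [decide ((⌊x * 2^n⌋₊ / 2^(n-1-i)) % 2 = 1)]) m := by
    intro m
    induction m with
    | zero => intro _; simp [bits]
    | succ m ih =>
      intro hm
      have h2 : bits x (m+1) = bits x m ++ [binDigit x (m+1)] := by simp [bits, List.range_succ]
      rw [h2, ih (by omega), binDigit_eq h0 h1]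
      have h3 := floor_shift (x := x) (m+1) (n-1-m)
      rw [show m + 1 + (n - 1 - m) = n by omega] at h3
      simp only [h3]
  exact this n le_rfl

/-- a string of given length -/
def repl (n : ℕ) : List Bool := Nat.rec (motive := fun _ => List Bool) [] (fun _ b => b ++ [false]) n
theorem repl_length (n : ℕ) : (repl n).length = n := by
  induction n with
  | zero => rfl
  | succ n ih =>
    have : repl (n+1) = repl n ++ [false] := rfl
    rw [this]; simp [ih]
@[fun_prop] theorem cpt_repl : Computable repl := by
  unfold repl
  exact cpt_rec (h := fun _ _ b => b ++ [false]) Computable.id (Computable.const []) (by fun_prop)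

theorem random_core {U : Computer} (hU : IsOptimal U) {o l r : ℕ → ℕ} (D : EnumData U o l r)
    {T β x c : ℝ} (hT : 0 < T) (hβ0 : 0 < β) (hβ1 : β < 1)
    (hβ : ∀ l : ℕ, β ^ l = (2:ℝ)^(-(l:ℝ)/T)) (h0 : 0 ≤ x) (h1 : x < 1) (hc : 0 < c) (k0 : ℕ)
    {g : ℕ → ℚ} (hg : Computable g) (hgt : Tendsto (fun k => (g k : ℝ)) atTop (nhds x))
    (hg2 : ∀ k, ∀ j ≥ k + k0, o j = 1 → c * ((l j : ℝ)^2 * β^(l j)) ≤ x - g k) :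
    ChaitinRandom U T x := by
  have cr := D.cr
  have hξ : Partrec (srch (fun (s : List Bool) k => qle (((bval s : ℚ) - 1) / 2^s.length) (g k))
      (fun _ k => repl (1 + ∑ i ∈ Finset.range (k + k0), r i))) := by
    refine srch_partrec (by fun_prop) ?_
    have hs : Computable (fun p : List Bool × ℕ => ∑ i ∈ Finset.range (p.2 + k0), r i) :=
      cpt_nsum (f := fun _ i => r i) (by fun_prop) (by fun_prop)
    fun_prop
  obtain ⟨d, hd⟩ := H_map hU hξ
  have key : ∀ n : ℕ, ∃ L : ℕ, 1 ≤ L ∧ c * ((L:ℝ)^2 * β^L) ≤ 2 * (1/2)^n ∧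
      L ≤ H U (bits x n) + d := by
    intro n
    have hv := bval_bits h0 h1 n
    have hfl := Nat.floor_le (show 0 ≤ x * 2^n by positivity)
    have hfl2 := Nat.lt_floor_add_one (x * 2^n)
    have h2n : (0:ℝ) < 2^n := by positivity
    obtain ⟨k, hk, hk2⟩ := srch_mem (P := fun (s : List Bool) k =>
      qle (((bval s : ℚ) - 1) / 2^s.length) (g k))
      (G := fun _ k => repl (1 + ∑ i ∈ Finset.range (k + k0), r i)) (a := bits x n) (by
        have : ((⌊x * 2^n⌋₊ : ℝ) - 1) / 2^n < x := by
          rw [div_lt_iff₀ h2n]; linarith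
        obtain ⟨k, hk⟩ := (hgt.eventually (lt_mem_nhds this)).exists
        refine ⟨k, (qle_iff _ _).2 ?_⟩
        rw [bits_length, hv]
        have h3 : ((((⌊x * 2^n⌋₊ : ℚ) - 1) / 2^n : ℚ) : ℝ) ≤ (g k : ℝ) := by
          push_cast; exact hk.le
        exact_mod_cast h3)
    have hk' := (qle_iff _ _).1 hk
    rw [bits_length, hv] at hk'
    have h3 : ((⌊x * 2^n⌋₊ : ℝ) - 1) / 2^n ≤ (g k : ℝ) := by
      have : ((((⌊x * 2^n⌋₊ : ℚ) - 1) / 2^n : ℚ) : ℝ) ≤ (g k : ℝ) := by exact_mod_cast hk'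
      push_cast at this; exact this
    have h4 : x - g k ≤ 2 * (1/2)^n := by
      rw [one_div, inv_pow]
      rw [div_le_iff₀ h2n] at h3
      rw [← div_eq_mul_inv, le_div_iff₀ h2n]
      nlinarith
    set v := repl (1 + ∑ i ∈ Finset.range (k + k0), r i) with hvdef
    obtain ⟨q, hq, hq2⟩ := H_prog hU (bits x n)
    obtain ⟨p, hp, hp2⟩ := H_prog hU v
    obtain ⟨j, hj1, hj2, hj3⟩ := D.prog p v hp2
    have hjk : k + k0 ≤ j := by
      by_contra hlt
      have h5 : r j ≤ ∑ i ∈ Finset.range (k + k0), r i :=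
        Finset.single_le_sum (f := r) (fun _ _ => Nat.zero_le _) (Finset.mem_range.2 (by omega))
      rw [hj3, hvdef, repl_length] at h5
      omega
    refine ⟨l j, D.l1 j hj1, (hg2 k j hjk hj1).trans h4, ?_⟩
    rw [hj2, hp, ← hq]
    exact hd q _ v hq2 hk2
  unfold ChaitinRandom
  rw [tendsto_atTop]
  intro M
  set M' := M + d with hM'
  set A : ℝ := 2 * (2:ℝ)^(M'/T) / c with hA
  obtain ⟨N, hN⟩ := exists_nat_ge A
  have hpos : 0 < c * β^N := by positivity
  have ht : Tendsto (fun n : ℕ => 2 * (1/2 : ℝ)^n) atTop (nhds 0) := by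
    have := (tendsto_pow_atTop_nhds_zero_of_lt_one (r := (1/2:ℝ)) (by norm_num) (by norm_num)).const_mul 2
    simpa using this
  filter_upwards [ht.eventually (gt_mem_nhds hpos)] with n hn
  obtain ⟨L, hL1, hL2, hL3⟩ := key n
  have hL3' : (L:ℝ) ≤ H U (bits x n) + d := by exact_mod_cast hL3
  by_contra hcon
  have hlt : (L:ℝ) < T * n + M' := by rw [hM']; linarith
  have hL1' : (1:ℝ) ≤ L := by exact_mod_cast hL1
  have e1 : (1/2:ℝ)^n * (2:ℝ)^(-(M'/T)) ≤ β^L := by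
    rw [hβ, one_div, inv_pow, ← Real.rpow_natCast, ← Real.rpow_neg (by norm_num),
      ← Real.rpow_add (by norm_num)]
    apply Real.rpow_le_rpow_of_exponent_le (by norm_num)
    have : (L:ℝ)/T ≤ n + M'/T := by
      rw [div_le_iff₀ hT, add_mul, div_mul_cancel₀ _ hT.ne']; linarith
    rw [neg_div]; linarith
  have h2n : (0:ℝ) < (1/2)^n := by positivity
  have hMpos : (0:ℝ) < (2:ℝ)^(M'/T) := Real.rpow_pos_of_pos (by norm_num) _
  have e2 : (L:ℝ)^2 ≤ A := by
    have h5 : c * ((L:ℝ)^2 * ((1/2:ℝ)^n * (2:ℝ)^(-(M'/T)))) ≤ 2 * (1/2)^n :=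
      le_trans (by gcongr) hL2
    rw [Real.rpow_neg (by norm_num)] at h5
    rw [hA, le_div_iff₀ hc]
    have h6 : c * (L:ℝ)^2 * ((2:ℝ)^(M'/T))⁻¹ ≤ 2 := by
      by_contra h7
      push Not at h7
      nlinarith
    rw [← div_eq_mul_inv, div_le_iff₀ hMpos] at h6
    linarith
  have e3 : L ≤ N := by
    have : (L:ℝ) ≤ N := by nlinarith
    exact_mod_cast this
  have e4 : β^N ≤ β^L := pow_le_pow_of_le_one hβ0.le hβ1.le e3
  have e5 : c * β^N ≤ c * ((L:ℝ)^2 * β^L) := by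
    apply mul_le_mul_of_nonneg_left _ hc.le
    have h8 : (1:ℝ) ≤ (L:ℝ)^2 := one_le_pow₀ hL1'
    have h9 : 0 < β^L := by positivity
    have h10 : 1 * β^L ≤ (L:ℝ)^2 * β^L := mul_le_mul_of_nonneg_right h8 h9.le
    linarith
  linarith


theorem srch_mem_min {α : Type*} {P : α → ℕ → Bool} {G : α → ℕ → List Bool} {a : α} {k : ℕ}
    (hk : P a k = true) (hm : ∀ j < k, P a j = false) : G a k ∈ srch P G a := by
  refine Part.mem_bind (a := k) ?_ (Part.mem_some _)
  rw [Nat.mem_rfind]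
  refine ⟨?_, fun {j} hj => ?_⟩
  · show true ∈ Part.some (P a k)
    rw [hk]; exact Part.mem_some _
  · show false ∈ Part.some (P a j)
    rw [hm j hj]; exact Part.mem_some _

theorem bval_tobits {n v : ℕ} (h : v < 2^n) :
    bval (tobits n v) = v ∧ (tobits n v).length = n := by
  have h2 : (0:ℝ) < 2^n := by positivity
  have h0 : (0:ℝ) ≤ (v:ℝ)/2^n := by positivity
  have h1 : (v:ℝ)/2^n < 1 := by
    rw [div_lt_one h2]; exact_mod_cast h
  have e := bits_eq_tobits h0 h1 n
  have e2 := bval_bits h0 h1 n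
  rw [div_mul_cancel₀ _ h2.ne', Nat.floor_natCast] at e e2
  rw [← e, e2]
  exact ⟨rfl, bits_length _ _⟩

theorem tail_bound {U : Computer} {o l r : ℕ → ℕ} (D : EnumData U o l r) {β ρ : ℝ}
    (hβ0 : 0 ≤ β) (hβρ : β < ρ) (hρ : 2 * ρ ≤ 1) : ∃ Kc : ℝ, 0 < Kc ∧ ∀ k L : ℕ,
      (∀ K ≥ k, ∑ i ∈ Finset.Ico k K, (o i : ℝ) * (1/2)^(l i) ≤ (1/2)^L) →
      ∀ K ≥ k, ∑ i ∈ Finset.Ico k K, (o i : ℝ) * ((l i : ℝ)^2 * β^(l i)) ≤ Kc * ρ^L := by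
  have hρ0 : 0 < ρ := lt_of_le_of_lt hβ0 hβρ
  obtain ⟨Kc, hK, hb⟩ := pow_bound 2 (β / (2*ρ)) (by positivity) (by
    rw [div_lt_iff₀ (by positivity)]; linarith)
  have hb2 : ∀ n : ℕ, (n:ℝ)^2 * β^n ≤ Kc * ((1/2)^n * (2*ρ)^n) := by
    intro n
    have h := mul_le_mul_of_nonneg_right (hb n) (show 0 ≤ (2*ρ)^n by positivity)
    rw [div_pow] at h
    have e : (n:ℝ)^2 * (β^n / (2*ρ)^n) * (2*ρ)^n = (n:ℝ)^2 * β^n := by field_simp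
    rw [e] at h; linarith
  refine ⟨Kc, hK, fun k L h K hKk => ?_⟩
  have hl : ∀ i ≥ k, o i = 1 → L ≤ l i := by
    intro i hi ho
    have h1 := h (i+1) (by omega)
    have h2 := Finset.single_le_sum (s := Finset.Ico k (i+1)) (f := fun i => (o i : ℝ) * (1/2:ℝ)^(l i))
      (fun i _ => by positivity) (Finset.mem_Ico.2 ⟨hi, by omega⟩)
    have h3 := h2.trans h1
    simp only [ho, Nat.cast_one, one_mul] at h3
    exact (pow_le_pow_iff_right_of_lt_one₀ (by norm_num) (by norm_num)).1 h3
  calc ∑ i ∈ Finset.Ico k K, (o i : ℝ) * ((l i : ℝ)^2 * β^(l i))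
      ≤ ∑ i ∈ Finset.Ico k K, Kc * (2*ρ)^L * ((o i : ℝ) * (1/2)^(l i)) := by
        apply Finset.sum_le_sum
        intro i hi
        rcases D.o01 i with h0 | h1
        · simp [h0]
        · have h2 := hb2 (l i)
          have h3 : (2*ρ)^(l i) ≤ (2*ρ)^L :=
            pow_le_pow_of_le_one (by positivity) hρ (hl i (Finset.mem_Ico.1 hi).1 h1)
          have h4 : Kc * ((1/2)^(l i) * (2*ρ)^(l i)) ≤ Kc * ((1/2)^(l i) * (2*ρ)^L) := by gcongr
          rw [h1]; push_cast; linarith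
    _ = Kc * (2*ρ)^L * ∑ i ∈ Finset.Ico k K, (o i : ℝ) * (1/2)^(l i) := by rw [Finset.mul_sum]
    _ ≤ Kc * (2*ρ)^L * (1/2)^L := by
        apply mul_le_mul_of_nonneg_left (h K hKk) (by positivity)
    _ = Kc * ρ^L := by
        rw [mul_assoc, ← mul_pow]; congr 2; ring

theorem cpt_P {o l : ℕ → ℕ} (co : Computable o) (cl : Computable l) (b N s t k0 : ℕ) :
    Computable (fun p : (ℕ × List Bool) × ℕ => decide (N * p.1.1 + t ≤ p.2) &&
      qle ((bval p.1.2 / 2^s : ℕ) : ℚ) (qpsum o l 0 (1/2) (p.2+k0) * 2^(b * p.1.1))) := by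
  have k1 : Computable (fun p : (ℕ × List Bool) × ℕ => qpsum o l 0 (1/2) (p.2+k0)) :=
    cpt_qpsum co cl 0 (Computable.const _) (by fun_prop)
  have k2 : Computable (fun p : (ℕ × List Bool) × ℕ => (2:ℚ)^(b * p.1.1)) :=
    cpt_qpow (Computable.const _) (by fun_prop)
  have k3 : Computable (fun p : (ℕ × List Bool) × ℕ => bval p.1.2 / 2^s) :=
    cpt_div (by fun_prop) (Computable.const _)
  have h1 : Computable (fun p : (ℕ × List Bool) × ℕ => p.1.1) :=
    Computable.fst.comp Computable.fst
  have k4 : Computable (fun p : (ℕ × List Bool) × ℕ => decide (N * p.1.1 + t ≤ p.2)) :=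
    cpt_dle (cpt_add (cpt_mul (Computable.const _) h1) (Computable.const _)) Computable.snd
  exact cpt_and k4 (cpt_qle (cpt_qnat k3) (cpt_qmul k1 k2))

theorem cpt_G {g : ℕ → ℚ} (hg : Computable g) (N s t : ℕ) :
    Computable (fun p : (ℕ × List Bool) × ℕ =>
      tobits (N * p.1.1 + t) (⌊g p.2 * 2^(N * p.1.1 + t)⌋₊ + bval p.1.2 % 2^s)) := by
  have k0 : Computable (fun p : (ℕ × List Bool) × ℕ => N * p.1.1 + t) := by fun_prop
  have k1 : Computable (fun p : (ℕ × List Bool) × ℕ => g p.2) := by fun_prop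
  have k2 : Computable (fun p : (ℕ × List Bool) × ℕ => (2:ℚ)^(N * p.1.1 + t)) :=
    cpt_qpow (Computable.const _) k0
  have k3 : Computable (fun p : (ℕ × List Bool) × ℕ => bval p.1.2 % 2^s) :=
    cpt_mod (by fun_prop) (Computable.const _)
  exact cpt_tobits k0 (cpt_add (cpt_qfloor (cpt_qmul k1 k2)) k3)

theorem compress_key {U : Computer} (hU : IsOptimal U) {o l r : ℕ → ℕ} (D : EnumData U o l r)
    (hex : ∃ i, o i = 1)
    {β x c' ρ : ℝ} (hβ0 : 0 ≤ β) (hβρ : β < ρ) (hρ : 2 * ρ ≤ 1) {b N : ℕ} (hbN : ρ^b = (1/2)^N)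
    (h0 : 0 ≤ x) (h1 : x < 1) (hc : 0 < c') (k0 : ℕ)
    {g : ℕ → ℚ} (hg : Computable g) (hgx : ∀ k, (g k : ℝ) ≤ x)
    (hg3 : ∀ k B, (∀ K ≥ k + k0, ∑ i ∈ Finset.Ico (k+k0) K, (o i : ℝ) * ((l i : ℝ)^2 * β^(l i)) ≤ B) →
      x - g k ≤ c' * B + (1/2)^k) (t : ℕ) :
    ∃ d, ∀ m, H U (bits x (N * m + t)) ≤ (b+1) * m + d := by
  obtain ⟨Kc, hKc, htail⟩ := tail_bound D hβ0 hβρ hρ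
  obtain ⟨s, hs⟩ := pow_unbounded_of_one_lt (c' * Kc * 2^t + 2 : ℝ) (show (1:ℝ) < 2 by norm_num)
  have co := D.co
  have cl := D.cl
  let P : ℕ × List Bool → ℕ → Bool := fun a k => decide (N * a.1 + t ≤ k) &&
    qle ((bval a.2 / 2^s : ℕ) : ℚ) (qpsum o l 0 (1/2) (k+k0) * 2^(b * a.1))
  let G : ℕ × List Bool → ℕ → List Bool := fun a k =>
    tobits (N * a.1 + t) (⌊g k * 2^(N * a.1 + t)⌋₊ + bval a.2 % 2^s)
  have hF : Partrec (srch P G) := by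
    refine srch_partrec ?_ ?_
    · exact cpt_P co cl b N s t k0
    · exact cpt_G hg N s t
  obtain ⟨d, hd⟩ := coding hU b s hF
  refine ⟨1 + s + d, fun m => ?_⟩
  set n := N * m + t with hn
  set L := b * m with hL
  have hsum : Summable (fun i => (o i : ℝ) * (1/2 : ℝ)^(l i)) := summ_half D
  set Ω := ∑' i, (o i : ℝ) * (1/2 : ℝ)^(l i) with hΩ
  have hΩ1 : Ω ≤ 1 := hsum.tsum_le_of_sum_range_le D.kraft
  have hΩ0 : 0 < Ω := by
    obtain ⟨i, hi⟩ := hex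
    refine hsum.tsum_pos (fun i => by positivity) i ?_
    rw [hi]; positivity
  have hps : ∀ k, psum o l 0 (1/2) k = ∑ i ∈ Finset.range k, (o i : ℝ) * (1/2 : ℝ)^(l i) := by
    intro k; unfold psum; simp
  have hpt : Tendsto (psum o l 0 (1/2)) atTop (nhds Ω) := by
    have := hsum.hasSum.tendsto_sum_nat
    exact this.congr fun k => (hps k).symm
  have h2L : (0:ℝ) < 2^L := by positivity
  obtain ⟨A, hA1, hA2⟩ : ∃ A : ℕ, (A:ℝ) < Ω * 2^L ∧ Ω * 2^L ≤ A + 1 := by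
    have hp : 0 < ⌈Ω * 2^L⌉₊ := Nat.ceil_pos.2 (by positivity)
    obtain ⟨A, hA⟩ := Nat.exists_eq_succ_of_ne_zero hp.ne'
    refine ⟨A, Nat.lt_ceil.1 (by omega), ?_⟩
    have := Nat.le_ceil (Ω * 2^L)
    rw [hA] at this; push_cast at this; exact this
  have hAL : A < 2^L := by
    have : (A:ℝ) < 2^L := by nlinarith
    exact_mod_cast this
  have hqc : ∀ k, ((A : ℕ) : ℚ) ≤ qpsum o l 0 (1/2) k * 2^L ↔ (A:ℝ) ≤ psum o l 0 (1/2) k * 2^L := by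
    intro k
    have := qpsum_cast o l 0 (1/2) k
    push_cast at this
    rw [← this]
    exact_mod_cast Iff.rfl
  let Q : ℕ → Bool := fun k => decide (n ≤ k) && qle (A : ℚ) (qpsum o l 0 (1/2) (k+k0) * 2^L)
  have hQ : ∃ k, Q k = true := by
    have e1 : Tendsto (fun k => psum o l 0 (1/2) (k + k0) * 2^L) atTop (nhds (Ω * 2^L)) :=
      ((hpt.comp (tendsto_add_atTop_nat k0)).mul_const _)
    obtain ⟨k, hk1, hk2⟩ := ((e1.eventually (lt_mem_nhds hA1)).and (eventually_ge_atTop n)).exists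
    refine ⟨k, ?_⟩
    simp only [Q, Bool.and_eq_true, decide_eq_true_eq, qle_iff, hqc]
    exact ⟨hk2, hk1.le⟩
  obtain ⟨k, hk, hkm⟩ : ∃ k, Q k = true ∧ ∀ j < k, Q j = false := by
    refine ⟨Nat.find hQ, Nat.find_spec hQ, fun j hj => ?_⟩
    have := Nat.find_min hQ hj
    simpa using this
  have hk' := hk
  simp only [Q, Bool.and_eq_true, decide_eq_true_eq, qle_iff, hqc] at hk'
  obtain ⟨hnk, hAk⟩ := hk'
  have hx1 : x - g k ≤ c' * (Kc * ρ^L) + (1/2)^k := by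
    apply hg3 k
    apply htail (k+k0) L
    intro K hK
    have e1 : psum o l 0 (1/2) K ≤ Ω := by
      rw [hps]; exact hsum.sum_le_tsum _ (fun i _ => by positivity)
    rw [Finset.sum_Ico_eq_sub _ hK, ← hps, ← hps]
    rw [one_div_pow, le_div_iff₀ h2L]
    nlinarith
  have hx2 : x - g k ≤ (c' * Kc * 2^t + 1) * (1/2)^n := by
    have e1 : ρ^L = (1/2:ℝ)^(N*m) := by rw [hL, pow_mul, hbN, ← pow_mul]
    have e2 : (1/2:ℝ)^k ≤ (1/2)^n := pow_le_pow_of_le_one (by norm_num) (by norm_num) hnk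
    have e3 : (2:ℝ)^t * (1/2:ℝ)^n = (1/2:ℝ)^(N*m) := by
      rw [hn, pow_add, mul_comm, mul_assoc, ← mul_pow]; norm_num
    rw [e1, ← e3] at hx1
    linarith
  have h2n : (0:ℝ) < 2^n := by positivity
  have hle : ⌊g k * 2^n⌋₊ ≤ ⌊x * 2^n⌋₊ := by
    have : ((g k * 2^n : ℚ) : ℝ) ≤ x * 2^n := by
      push_cast
      exact mul_le_mul_of_nonneg_right (hgx k) h2n.le
    calc ⌊g k * 2^n⌋₊ = ⌊((g k * 2^n : ℚ) : ℝ)⌋₊ := by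
          rw [← Int.floor_toNat, ← Int.floor_toNat, Rat.floor_cast]
      _ ≤ _ := Nat.floor_le_floor this
  obtain ⟨e, he⟩ := Nat.exists_eq_add_of_le hle
  have hes : e < 2^s := by
    have e1 := Nat.floor_le (show 0 ≤ x * 2^n by positivity)
    have e2 : ((g k * 2^n : ℚ) : ℝ) < (⌊g k * 2^n⌋₊ : ℝ) + 1 := by
      exact_mod_cast Nat.lt_floor_add_one (g k * 2^n)
    push_cast at e2
    rw [he] at e1; push_cast at e1
    have e3 : (x - g k) * 2^n ≤ c' * Kc * 2^t + 1 := by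
      rw [one_div_pow, mul_one_div, le_div_iff₀ h2n] at hx2; exact hx2
    have : (e:ℝ) < 2^s := by nlinarith
    exact_mod_cast this
  have hv : A * 2^s + e < 2^(L + s) := by
    rw [pow_add]
    calc A * 2^s + e < A * 2^s + 2^s := by omega
      _ = (A+1) * 2^s := by ring
      _ ≤ 2^L * 2^s := Nat.mul_le_mul_right _ hAL
  obtain ⟨w1, w2⟩ := bval_tobits hv
  set w := tobits (L+s) (A * 2^s + e) with hw
  have hdiv : bval w / 2^s = A := by
    rw [w1, mul_comm, Nat.mul_add_div (by positivity), Nat.div_eq_of_lt hes, add_zero]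
  have hmod : bval w % 2^s = e := by
    rw [w1, mul_comm, Nat.mul_add_mod, Nat.mod_eq_of_lt hes]
  have hPQ : ∀ j, P (m, w) j = Q j := by
    intro j; simp only [P, Q, hdiv]; rfl
  have hmem := srch_mem_min (P := P) (G := G) (a := (m, w)) (k := k) (by rw [hPQ]; exact hk)
    (fun j hj => by rw [hPQ]; exact hkm j hj)
  have hG : G (m, w) k = bits x n := by
    simp only [G, hmod]
    rw [bits_eq_tobits h0 h1, he]
  rw [hG] at hmem
  have := (hd m w _ w2 hmem).1
  calc _ ≤ _ := this
    _ = _ := by ring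

theorem compress_core {U : Computer} (hU : IsOptimal U) {o l r : ℕ → ℕ} (D : EnumData U o l r)
    (hex : ∃ i, o i = 1)
    {T β x c' : ℝ} (hT : 0 < T) (hT1 : T < 1)
    (hβ : β = (2:ℝ)^(-(1/T)))
    (h0 : 0 ≤ x) (h1 : x < 1) (hc : 0 < c') (k0 : ℕ)
    {g : ℕ → ℚ} (hg : Computable g) (hgx : ∀ k, (g k : ℝ) ≤ x)
    (hg3 : ∀ k B, (∀ K ≥ k + k0, ∑ i ∈ Finset.Ico (k+k0) K, (o i : ℝ) * ((l i : ℝ)^2 * β^(l i)) ≤ B) →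
      x - g k ≤ c' * B + (1/2)^k) :
    DCompressible U T x := by
  unfold DCompressible
  apply le_of_forall_pos_le_add
  intro ε hε
  obtain ⟨N, hN⟩ := exists_nat_gt (max (4/ε) (4/(1-T)))
  have hN1 : 4 < ε * N := by
    have := (le_max_left _ _).trans_lt hN
    rw [div_lt_iff₀ hε] at this; linarith
  have hN2 : 4 < (1-T) * N := by
    have := (le_max_right _ _).trans_lt hN
    rw [div_lt_iff₀ (by linarith)] at this; linarith
  have hN0 : 0 < N := by
    rcases Nat.eq_zero_or_pos N with h | h
    · rw [h] at hN1; norm_num at hN1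
    · exact h
  have hN0' : (0:ℝ) < N := by exact_mod_cast hN0
  set b := ⌊T * N⌋₊ + 1 with hb
  have hb1 : T * N < b := by
    rw [hb]; push_cast; exact Nat.lt_floor_add_one _
  have hb2 : (b:ℝ) ≤ T * N + 1 := by
    rw [hb]; push_cast
    have := Nat.floor_le (show 0 ≤ T * N by positivity)
    linarith
  have hb0 : (0:ℝ) < b := lt_trans (by positivity) hb1
  set ρ : ℝ := (2:ℝ)^(-((N:ℝ)/b)) with hρ
  have hβρ : β < ρ := by
    rw [hβ, hρ]
    apply Real.rpow_lt_rpow_of_exponent_lt (by norm_num)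
    rw [neg_lt_neg_iff, div_lt_div_iff₀ hb0 hT]; linarith
  have hρ2 : 2 * ρ ≤ 1 := by
    have : ρ ≤ (2:ℝ)^(-1:ℝ) := by
      rw [hρ]
      apply Real.rpow_le_rpow_of_exponent_le (by norm_num)
      rw [neg_le_neg_iff, le_div_iff₀ hb0]; nlinarith
    rw [Real.rpow_neg_one] at this
    linarith
  have hρN : ρ^b = (1/2)^N := by
    rw [hρ, ← Real.rpow_natCast, ← Real.rpow_mul (by norm_num), neg_mul,
      div_mul_cancel₀ _ hb0.ne', Real.rpow_neg (by norm_num), Real.rpow_natCast, one_div, inv_pow]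
  have hβ0 : 0 ≤ β := by rw [hβ]; positivity
  choose d hd using compress_key hU D hex hβ0 hβρ hρ2 hρN h0 h1 hc k0 hg hgx hg3
  set dd := ∑ t ∈ Finset.range N, d t with hdd
  have hH : ∀ n : ℕ, (H U (bits x n) : ℝ) ≤ (b+1)/N * n + dd := by
    intro n
    have e1 := hd (n % N) (n / N)
    rw [Nat.div_add_mod] at e1
    have e2 : d (n % N) ≤ dd := Finset.single_le_sum (f := d) (fun _ _ => Nat.zero_le _)
      (Finset.mem_range.2 (Nat.mod_lt _ hN0))
    have e3 : (H U (bits x n) : ℝ) ≤ (b+1) * (n / N : ℕ) + dd := by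
      exact_mod_cast e1.trans (by omega)
    have e4 : ((n / N : ℕ) : ℝ) ≤ n / N := Nat.cast_div_le
    calc (H U (bits x n) : ℝ) ≤ (b+1) * (n / N : ℕ) + dd := e3
      _ ≤ (b+1) * (n / N) + dd := by gcongr
      _ = _ := by ring
  obtain ⟨M, hM⟩ := exists_nat_gt (max 1 (2 * dd / ε))
  apply limsup_le_of_le
  · exact isCoboundedUnder_le_of_le atTop (x := 0) (fun n => by positivity)
  · filter_upwards [eventually_ge_atTop M] with n hn
    have hn' : (M:ℝ) ≤ n := by exact_mod_cast hn
    have hn0 : (0:ℝ) < n := by linarith [(le_max_left (1:ℝ) (2 * dd / ε)).trans_lt hM]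
    have hnd : 2 * dd < ε * n := by
      have := ((le_max_right (1:ℝ) (2 * dd / ε)).trans_lt hM).trans_le hn'
      rw [div_lt_iff₀ hε] at this; linarith
    rw [div_le_iff₀ hn0]
    have e1 : ((b:ℝ)+1)/N ≤ T + ε/2 := by
      rw [div_le_iff₀ hN0']; nlinarith
    calc (H U (bits x n) : ℝ) ≤ (b+1)/N * n + dd := hH n
      _ ≤ (T + ε/2) * n + dd := by gcongr
      _ ≤ (T + ε) * n := by linarith


theorem two_rpow_eq {T : ℝ} (l : ℕ) : (2:ℝ)^(-(l:ℝ)/T) = (Real.exp (-(Real.log 2 / T)))^l := by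
  rw [Real.rpow_def_of_pos (by norm_num), ← Real.exp_nat_mul]
  congr 1; ring

theorem beta_lt_half {T : ℝ} (hT : 0 < T) (hT1 : T < 1) : Real.exp (-(Real.log 2 / T)) < 1/2 := by
  have h : (1/2:ℝ) = Real.exp (-Real.log 2) := by
    rw [Real.exp_neg, Real.exp_log (by norm_num)]; norm_num
  rw [h, Real.exp_lt_exp, neg_lt_neg_iff, lt_div_iff₀ hT]
  have := Real.log_pos (show (1:ℝ) < 2 by norm_num)
  nlinarith

theorem summ_dom {U : Computer} {o l r : ℕ → ℕ} (D : EnumData U o l r) (j : ℕ) {T : ℝ}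
    (hT : 0 < T) (hT1 : T < 1) :
    Summable (fun p : U.domain => ((p : List Bool).length : ℝ)^j *
      (2:ℝ)^(-((p : List Bool).length : ℝ)/T)) := by
  rw [D.summ (fun n => (n:ℝ)^j * (2:ℝ)^(-(n:ℝ)/T))]
  simp only [two_rpow_eq]
  exact summ_w D j (Real.exp_pos _).le (beta_lt_half hT hT1)

theorem tsum_dom {U : Computer} {o l r : ℕ → ℕ} (D : EnumData U o l r) (j : ℕ) {T : ℝ} :
    ∑' p : U.domain, ((p : List Bool).length : ℝ)^j *
      (2:ℝ)^(-((p : List Bool).length : ℝ)/T) = fsum o l j (Real.exp (-(Real.log 2 / T))) := by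
  rw [D.tsum (fun n => (n:ℝ)^j * (2:ℝ)^(-(n:ℝ)/T))]
  simp only [two_rpow_eq]
  rfl

theorem deriv_dom {U : Computer} {o l r : ℕ → ℕ} (D : EnumData U o l r) (j : ℕ) {T : ℝ}
    (hT : 0 < T) (hT1 : T < 1) :
    HasDerivAt (fun x : ℝ => ∑' p : U.domain, ((p : List Bool).length : ℝ)^j *
      (2:ℝ)^(-((p : List Bool).length : ℝ)/x))
      (Real.log 2 / T^2 * ∑' p : U.domain, ((p : List Bool).length : ℝ)^(j+1) *
      (2:ℝ)^(-((p : List Bool).length : ℝ)/T)) T := by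
  obtain ⟨T1, hTT1, hT11⟩ := exists_between hT1
  have hlog := Real.log_pos (show (1:ℝ) < 2 by norm_num)
  rw [← tsum_mul_left]
  refine hasDerivAt_tsum_of_isPreconnected (t := Set.Ioo (T/2) T1) (y₀ := T)
    (u := fun p : U.domain => Real.log 2 / (T/2)^2 * (((p : List Bool).length : ℝ)^(j+1) *
      (2:ℝ)^(-((p : List Bool).length : ℝ)/T1)))
    (g := fun (p : U.domain) (x : ℝ) => ((p : List Bool).length : ℝ)^j *
      (2:ℝ)^(-((p : List Bool).length : ℝ)/x))
    (g' := fun (p : U.domain) (x : ℝ) => Real.log 2 / x^2 * (((p : List Bool).length : ℝ)^(j+1) *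
      (2:ℝ)^(-((p : List Bool).length : ℝ)/x)))
    ((summ_dom D (j+1) (hT.trans hTT1) hT11).mul_left _) isOpen_Ioo isPreconnected_Ioo ?_ ?_
    ⟨by linarith, hTT1⟩ (summ_dom D j hT hT1) ⟨by linarith, hTT1⟩
  · intro p x hx
    have hx0 : x ≠ 0 := (lt_trans (by positivity) hx.1).ne'
    set n : ℝ := ((p : List Bool).length : ℝ)
    have h1 : HasDerivAt (fun x : ℝ => -n / x) (n / x^2) x := by
      have := (hasDerivAt_inv hx0).const_mul (-n)
      simp only [div_eq_mul_inv]
      exact this.congr_deriv (by ring)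
    have h2 := (h1.const_rpow (a := 2) (by norm_num)).const_mul (n^j)
    exact h2.congr_deriv (by ring)
  · intro p x hx
    have hx0 : 0 < x := lt_trans (by positivity) hx.1
    rw [Real.norm_of_nonneg (by positivity)]
    have h1 : T/2 ≤ x := hx.1.le
    have h2 : (2:ℝ)^(-((p : List Bool).length : ℝ)/x) ≤ (2:ℝ)^(-((p : List Bool).length : ℝ)/T1) := by
      apply Real.rpow_le_rpow_of_exponent_le (by norm_num)
      rw [neg_div, neg_div, neg_le_neg_iff]
      have := hx.2.le
      gcongr
    gcongr

theorem zterm_eq (U : Computer) (x : ℝ) : zterm U x = fun p : U.domain =>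
    ((p : List Bool).length : ℝ)^0 * (2:ℝ)^(-((p : List Bool).length : ℝ)/x) := by
  funext p; simp [zterm]
theorem wlterm_eq (U : Computer) (x : ℝ) : wlterm U x = fun p : U.domain =>
    ((p : List Bool).length : ℝ)^1 * (2:ℝ)^(-((p : List Bool).length : ℝ)/x) := by
  funext p; simp [wlterm]
theorem wsqterm_eq (U : Computer) (x : ℝ) : wsqterm U x = fun p : U.domain =>
    ((p : List Bool).length : ℝ)^2 * (2:ℝ)^(-((p : List Bool).length : ℝ)/x) := by
  funext p; simp [wsqterm]


theorem cpt_shift {g : ℕ → ℚ} (hg : Computable g) (z : ℤ) : Computable (fun k => g k - (z : ℚ)) :=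
  cpt_qsub hg (Computable.const _)

theorem heat_core {U : Computer} (hU : IsOptimal U) {o l r : ℕ → ℕ} (D : EnumData U o l r)
    (hex : ∃ i, o i = 1) {T : ℝ} (hT0 : 0 < T) (hT1 : T < 1) (hTc : ComputableReal T) :
    LeftComputable (Real.log 2 / T^2 * fvar o l (Real.exp (-(Real.log 2 / T)))) ∧
    ChaitinRandom U T (Real.log 2 / T^2 * fvar o l (Real.exp (-(Real.log 2 / T)))) ∧
    DCompressible U T (Real.log 2 / T^2 * fvar o l (Real.exp (-(Real.log 2 / T)))) := by
  have hb12 := beta_lt_half hT0 hT1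
  have hβr : ∀ l : ℕ, (Real.exp (-(Real.log 2 / T)))^l = (2:ℝ)^(-(l:ℝ)/T) :=
    fun l => (two_rpow_eq l).symm
  have hβr1 : Real.exp (-(Real.log 2 / T)) = (2:ℝ)^(-(1/T)) := by
    have := hβr 1
    rw [pow_one] at this
    rw [this]; congr 1; push_cast; ring
  have hCT := CRp_of_computable hT0 hTc
  have hCβ := CRp_beta hCT
  have hCγ := CRp_gamma hCT
  set β := Real.exp (-(Real.log 2 / T)) with hβ
  set γ := Real.log 2 / T^2 with hγ
  have hβ0 := CRp_pos hCβ
  have hγ0 := CRp_pos hCγ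
  obtain ⟨-, htv, k0, c, c', hc, hc', hpos, hle, hlow, hup⟩ := pvar_props D hex hβ0 hb12
  obtain ⟨g, hg, hga⟩ := exists_approx D hCβ hCγ k0 hpos
  set C := γ * fvar o l β with hC
  have hgC : ∀ k, (g k : ℝ) ≤ C := fun k =>
    (hga k).1.trans (mul_le_mul_of_nonneg_left (hle _ (by omega)) hγ0.le)
  have htp : Tendsto (fun k => γ * pvar o l β (k + k0)) atTop (nhds C) :=
    (htv.comp (tendsto_add_atTop_nat k0)).const_mul γ
  have hh : Tendsto (fun n : ℕ => (1/2 : ℝ)^n) atTop (nhds 0) :=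
    tendsto_pow_atTop_nhds_zero_of_lt_one (by norm_num) (by norm_num)
  have htg : Tendsto (fun k => (g k : ℝ)) atTop (nhds C) := by
    have h1 : Tendsto (fun k => γ * pvar o l β (k + k0) - (1/2:ℝ)^k) atTop (nhds C) := by
      simpa using htp.sub hh
    refine tendsto_of_tendsto_of_tendsto_of_le_of_le h1 htp (fun k => ?_) (fun k => (hga k).1)
    have := (hga k).2
    simp only
    linarith
  have hlow' : ∀ k, ∀ j ≥ k + k0, o j = 1 → (γ * c) * ((l j : ℝ)^2 * β^(l j)) ≤ C - g k := by
    intro k j hj ho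
    have h1 := mul_le_mul_of_nonneg_left (hlow (k+k0) (by omega) j hj ho) hγ0.le
    have := (hga k).1
    rw [hC]; linarith
  have hup' : ∀ k B, (∀ K ≥ k + k0, ∑ i ∈ Finset.Ico (k+k0) K, (o i : ℝ) * ((l i : ℝ)^2 * β^(l i)) ≤ B) →
      C - g k ≤ (γ * c') * B + (1/2)^k := by
    intro k B hB
    have h1 := mul_le_mul_of_nonneg_left (hup (k+k0) (by omega) B hB) hγ0.le
    have := (hga k).2
    rw [hC]; linarith
  have hf0 := Int.fract_nonneg C
  have hf1 := Int.fract_lt_one C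
  have hfr : Int.fract C = C - ⌊C⌋ := rfl
  have hg' := cpt_shift hg ⌊C⌋
  have hcast : ∀ k, ((g k - (⌊C⌋ : ℚ) : ℚ) : ℝ) = g k - ⌊C⌋ := fun k => by push_cast; rfl
  refine ⟨⟨fun k => - g k, cpt_qneg hg, fun k => ?_, ?_⟩, ?_, ?_⟩
  · push_cast; linarith [hgC k]
  · simp only [Rat.cast_neg]; exact htg.neg
  · have h := random_core hU D (c := γ * c) hT0 hβ0 (by linarith) hβr hf0 hf1 (by positivity) k0 hg' (by
      simp only [hcast]; exact htg.sub_const _) (fun k j hj ho => by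
      rw [hcast, hfr]; linarith [hlow' k j hj ho])
    unfold ChaitinRandom at h ⊢
    simpa only [bits_fract] using h
  · have h := compress_core hU D hex (c' := γ * c') hT0 hT1 hβr1 hf0 hf1 (by positivity) k0 hg' (fun k => by
      rw [hcast, hfr]; linarith [hgC k]) (fun k B hB => by
      rw [hcast, hfr]; linarith [hup' k B hB])
    unfold DCompressible at h ⊢
    simpa only [bits_fract] using h

/-- **Theorem (paper Thm 13(i)).** For computable `T` with `0 < T < 1`, the
series `Z(T)`, `W(1,T)`, `W(2,T)` converge with `Z(T) > 0`; the specific heat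
`C(T) = (ln 2 / T²)·(W(2,T)/Z(T) − (W(1,T)/Z(T))²)` is a left-computable real
which is Chaitin `T`-random and `T`-compressible; and the energy function
`x ↦ W(1,x)/Z(x)` is differentiable at `T` with derivative `C(T)`. -/
theorem specificHeat_random_compressible_hasDerivAt (U : Computer)
    (hU : IsOptimal U)
    (T : ℝ) (hT0 : 0 < T) (hT1 : T < 1) (hTc : ComputableReal T) :
    Summable (zterm U T) ∧
    Summable (wlterm U T) ∧
    Summable (wsqterm U T) ∧
    0 < ∑' p, zterm U T p ∧
    LeftComputable ((Real.log 2 / T ^ 2) *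
      ((∑' p, wsqterm U T p) / (∑' p, zterm U T p) -
        ((∑' p, wlterm U T p) / (∑' p, zterm U T p)) ^ 2)) ∧
    ChaitinRandom U T ((Real.log 2 / T ^ 2) *
      ((∑' p, wsqterm U T p) / (∑' p, zterm U T p) -
        ((∑' p, wlterm U T p) / (∑' p, zterm U T p)) ^ 2)) ∧
    DCompressible U T ((Real.log 2 / T ^ 2) *
      ((∑' p, wsqterm U T p) / (∑' p, zterm U T p) -
        ((∑' p, wlterm U T p) / (∑' p, zterm U T p)) ^ 2)) ∧
    HasDerivAt (fun x : ℝ => (∑' p, wlterm U x p) / (∑' p, zterm U x p))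
      ((Real.log 2 / T ^ 2) *
        ((∑' p, wsqterm U T p) / (∑' p, zterm U T p) -
          ((∑' p, wlterm U T p) / (∑' p, zterm U T p)) ^ 2)) T := by
  obtain ⟨o, l, r, D⟩ := exists_enumData hU
  have hex : ∃ i, o i = 1 := by
    obtain ⟨p, -, hp⟩ := H_prog hU []
    obtain ⟨i, hi, -⟩ := D.prog p _ hp
    exact ⟨i, hi⟩
  have hd0 := deriv_dom D 0 hT0 hT1
  have hd1 := deriv_dom D 1 hT0 hT1
  have hpos := (pvar_props D hex (Real.exp_pos _) (beta_lt_half hT0 hT1)).1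
  have hcore := heat_core hU D hex hT0 hT1 hTc
  unfold fvar at hcore
  simp only [zero_add, Nat.reduceAdd] at hd0 hd1
  simp only [zterm_eq, wlterm_eq, wsqterm_eq]
  refine ⟨summ_dom D 0 hT0 hT1, summ_dom D 1 hT0 hT1, summ_dom D 2 hT0 hT1, ?_, ?_, ?_, ?_, ?_⟩
  · rw [tsum_dom D]; exact hpos
  · simp only [tsum_dom D]; exact hcore.1
  · simp only [tsum_dom D]; exact hcore.2.1
  · simp only [tsum_dom D]; exact hcore.2.2
  · have hne := hpos.ne'
    rw [← tsum_dom D] at hne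
    refine (hd1.div hd0 hne).congr_deriv ?_
    field_simp
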